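/- arXiv:1610.05813 — 5 statements merged into one kernel-verified Lean document; each statement's English description precedes it below -/
import Mathlib

section
/- Fix an integer l ≥ 4 and let H be the free group on the l + 3 generators c₀, c₁, …, c_l, d, e. For each integer s let v_s = c₀^s c₁^s ⋯ c_l^s d e^s ∈ H. Then the elements {v_s : s ∈ ℤ} freely generate a subgroup of H; equivalently, the homomorphism from the free group on the set ℤ to H sending the generator indexed by s to v_s is injective. -/
/-!
Retract `H` onto the free group on `a, d` by `c₀ ↦ a`, `cᵢ ↦ 1` for `i ≠ 0`, `d ↦ d`,
`e ↦ a⁻¹`. Then `v_s` becomes `a ^ s * d * a ^ (-s)`, and these conjugates are free: letting `a`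
act on `FreeGroup ℤ` by the shift of `ℤ` and sending `d` to the generator at `0`, the free group on
`a, d` maps to `FreeGroup ℤ ⋊ ℤ` so that the conjugate by `a ^ s` becomes the generator at `s`.
Hence the map in question, followed by a homomorphism, is the injection
`FreeGroup ℤ → FreeGroup ℤ ⋊ ℤ`.
-/

/-- The element `v_s = c₀^s c₁^s ⋯ c_l^s d e^s` of the free group on the `l + 3`
generators `c₀, …, c_l, d, e`; the generator `Sum.inl i` is `cᵢ`, `Sum.inr false`
is `d` and `Sum.inr true` is `e`. -/
def vElt (l : ℕ) (s : ℤ) : FreeGroup (Fin (l + 1) ⊕ Bool) :=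
  (List.ofFn fun i : Fin (l + 1) => (FreeGroup.of (Sum.inl i : Fin (l + 1) ⊕ Bool)) ^ s).prod *
    FreeGroup.of (Sum.inr false : Fin (l + 1) ⊕ Bool) *
    (FreeGroup.of (Sum.inr true : Fin (l + 1) ⊕ Bool)) ^ s

/-- The action of the infinite cyclic group on `FreeGroup ℤ` by translation of the generators. -/
def shiftAction : Multiplicative ℤ →* MulAut (FreeGroup ℤ) where
  toFun n := FreeGroup.freeGroupCongr (Equiv.addLeft n.toAdd)
  map_one' := by
    apply MulEquiv.toMonoidHom_injective
    ext x
    simp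
  map_mul' m n := by
    apply MulEquiv.toMonoidHom_injective
    ext x
    simp [add_assoc]

/-- The homomorphism from `H` to `FreeGroup ℤ ⋊ ℤ` sending `c₀` to the shift, the other `cᵢ` to
`1`, `d` to the free generator at `0`, and `e` to the inverse of the shift. -/
def toShift (l : ℕ) :
    FreeGroup (Fin (l + 1) ⊕ Bool) →* FreeGroup ℤ ⋊[shiftAction] Multiplicative ℤ :=
  FreeGroup.lift fun x => match x with
    | Sum.inl i => if i = 0 then SemidirectProduct.inr (Multiplicative.ofAdd 1) else 1
    | Sum.inr false => SemidirectProduct.inl (FreeGroup.of 0)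
    | Sum.inr true => (SemidirectProduct.inr (Multiplicative.ofAdd 1))⁻¹

theorem toShift_vElt (l : ℕ) (s : ℤ) :
    toShift l (vElt l s) = SemidirectProduct.inl (FreeGroup.of s) := by
  have hs : (Multiplicative.ofAdd (1 : ℤ)) ^ s = Multiplicative.ofAdd s := by
    rw [← ofAdd_zsmul]; simp
  have hc : toShift l (List.ofFn fun i : Fin (l + 1) =>
      (FreeGroup.of (Sum.inl i : Fin (l + 1) ⊕ Bool)) ^ s).prod =
      SemidirectProduct.inr (Multiplicative.ofAdd s) := by
    rw [map_list_prod, List.map_ofFn, List.ofFn_succ, List.prod_cons, List.prod_eq_one]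
    · rw [Function.comp_apply, map_zpow, ← hs, map_zpow]; simp [toShift]
    · simp [toShift]
  have he : toShift l ((FreeGroup.of (Sum.inr true : Fin (l + 1) ⊕ Bool)) ^ s) =
      SemidirectProduct.inr (Multiplicative.ofAdd s)⁻¹ := by
    rw [map_zpow, ← hs, map_inv, map_zpow]; simp [toShift]
  have hd : toShift l (FreeGroup.of (Sum.inr false : Fin (l + 1) ⊕ Bool)) =
      SemidirectProduct.inl (FreeGroup.of 0) := by
    simp [toShift]
  rw [vElt, map_mul, map_mul, hc, hd, he, ← SemidirectProduct.inl_aut]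
  simp [shiftAction]

/-- The elements `v_s`, `s ∈ ℤ`, freely generate a subgroup of the free group on
`c₀, …, c_l, d, e`: the induced map from the free group on `ℤ` is injective. -/
theorem vElt_free (l : ℕ) (hl : 4 ≤ l) :
    Function.Injective (FreeGroup.lift (vElt l) : FreeGroup ℤ →* FreeGroup (Fin (l + 1) ⊕ Bool)) := by
  have h : (toShift l).comp (FreeGroup.lift (vElt l)) = SemidirectProduct.inl := by
    ext1 s
    simp [toShift_vElt]
  refine Function.Injective.of_comp (f := toShift l) ?_
  rw [← MonoidHom.coe_comp, h]
  exact SemidirectProduct.inl_injective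
end

section
/- Fix an integer l ≥ 4 and let H be the free group on the l + 3 generators c₀, c₁, …, c_l, d, e. For each integer s let v_s = c₀^s c₁^s ⋯ c_l^s d e^s ∈ H. Then the subgroup V_ℤ = ⟨v_s : s ∈ ℤ⟩ of H is a benign subgroup of H: the HNN-extension ⟨H, t : t⁻¹vt = v for all v ∈ V_ℤ⟩ embeds in a finitely presented group. -/
/-!
The free group `H` on `c₀, …, c_l, d, e` carries a one-parameter group of automorphisms `φ_s`,
`s ∈ ℤ`: writing `p_i(s) = c₀^s ⋯ c_{i-1}^s`, put `φ_s(cᵢ) = p_i(s) cᵢ p_i(s)⁻¹`,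
`φ_s(d) = v_s` and `φ_s(e) = e`. The identity `φ_s(p_i(r)) = p_i(s + r) p_i(s)⁻¹` (`shift_cPrefix`),
which is a telescoping product, gives `φ_s ∘ φ_r = φ_{s+r}` and `φ_s(v_r) = v_{s+r}`.

Hence `φ` preserves `V = ⟨v_s : s ∈ ℤ⟩`, so it extends to an action of `ℤ` on the HNN-extension
`H_V` fixing the stable letter `t`, and `H_V` embeds in the semidirect product `P = H_V ⋊ ℤ`.
The group `P` is finitely presented: if `a` is the generator of `ℤ`, the relations
`a x a⁻¹ = φ_1(x)` (`x` a generator of `H`), `t a = a t` and `t d = d t` suffice, because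
`v_s = a^s d a^{-s}` then commutes with `t` for every `s` (`presentation`).
-/

universe u

/-- A group is finitely presented if it admits a presentation with finitely many
generators and finitely many relators. -/
def IsFinitelyPresentedGroup (G : Type u) [Group G] : Prop :=
  ∃ (n : ℕ) (rels : Set (FreeGroup (Fin n))),
    rels.Finite ∧ Nonempty (PresentedGroup rels ≃* G)

/-- A subgroup `H` of `G` is benign if the HNN-extension
`⟨G, t : t⁻¹ht = h, h ∈ H⟩` embeds in a finitely presented group. -/
def Benign {G : Type u} [Group G] (H : Subgroup G) : Prop :=
  ∃ (P : Type u) (_ : Group P)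
    (f : HNNExtension G H H (MulEquiv.refl H) →* P),
    Function.Injective f ∧ IsFinitelyPresentedGroup P

namespace VBenign

variable {l : ℕ}

/-! ### The automorphisms of the free group -/

/-- The index type of the generators of `H`, so that `H = FreeGroup (Gen l)`. -/
abbrev Gen (l : ℕ) : Type := Fin (l + 1) ⊕ Bool

/-- The list `c₀^s, …, c_l^s`. -/
def cList (l : ℕ) (s : ℤ) : List (FreeGroup (Gen l)) :=
  List.ofFn fun i : Fin (l + 1) => (FreeGroup.of (Sum.inl i : Gen l)) ^ s

/-- The element `p_n(s) = c₀^s ⋯ c_{n-1}^s` (and `c₀^s ⋯ c_l^s` once `n ≥ l + 1`). -/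
def cPrefix (l n : ℕ) (s : ℤ) : FreeGroup (Gen l) := ((cList l s).take n).prod

theorem cPrefix_zero_left (s : ℤ) : cPrefix l 0 s = 1 := by simp [cPrefix]

theorem cPrefix_succ (n : ℕ) (hn : n < l + 1) (s : ℤ) :
    cPrefix l (n + 1) s = cPrefix l n s * (FreeGroup.of (Sum.inl ⟨n, hn⟩ : Gen l)) ^ s := by
  unfold cPrefix
  rw [List.prod_take_succ _ _ (by simpa [cList] using hn)]
  simp only [cList, List.getElem_ofFn]

theorem cPrefix_zero_right (n : ℕ) (hn : n ≤ l + 1) : cPrefix l n 0 = 1 := by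
  induction n with
  | zero => exact cPrefix_zero_left 0
  | succ n ih => rw [cPrefix_succ n hn, ih (by omega)]; simp

theorem vElt_eq (s : ℤ) : vElt l s = cPrefix l (l + 1) s *
    FreeGroup.of (Sum.inr false : Gen l) * (FreeGroup.of (Sum.inr true : Gen l)) ^ s := by
  unfold vElt cPrefix
  rw [List.take_of_length_le (by simp [cList])]
  rfl

theorem vElt_zero : vElt l 0 = FreeGroup.of (Sum.inr false : Gen l) := by
  rw [vElt_eq, cPrefix_zero_right _ le_rfl]; simp

/-- The endomorphism `φ_s` of `H` with `cᵢ ↦ p_i(s) cᵢ p_i(s)⁻¹`, `d ↦ v_s`, `e ↦ e`. -/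
def shift (l : ℕ) (s : ℤ) : FreeGroup (Gen l) →* FreeGroup (Gen l) :=
  FreeGroup.lift <| Sum.elim
    (fun i => cPrefix l i s * FreeGroup.of (Sum.inl i) * (cPrefix l i s)⁻¹)
    (fun b => if b then FreeGroup.of (Sum.inr true) else vElt l s)

theorem shift_c (s : ℤ) (i : Fin (l + 1)) : shift l s (FreeGroup.of (Sum.inl i)) =
    cPrefix l i s * FreeGroup.of (Sum.inl i) * (cPrefix l i s)⁻¹ := by simp [shift]

theorem shift_d (s : ℤ) : shift l s (FreeGroup.of (Sum.inr false)) = vElt l s := by simp [shift]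

theorem shift_e (s : ℤ) :
    shift l s (FreeGroup.of (Sum.inr true)) = FreeGroup.of (Sum.inr true) := by simp [shift]

theorem shift_cPrefix (s r : ℤ) (n : ℕ) (hn : n ≤ l + 1) :
    shift l s (cPrefix l n r) = cPrefix l n (s + r) * (cPrefix l n s)⁻¹ := by
  induction n with
  | zero => simp [cPrefix_zero_left]
  | succ n ih =>
    rw [cPrefix_succ n hn, cPrefix_succ n hn, cPrefix_succ n hn, map_mul, ih (by omega), map_zpow,
      shift_c, conj_zpow]
    have h := zpow_add (FreeGroup.of (Sum.inl ⟨n, hn⟩ : Gen l)) r s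
    rw [add_comm r s] at h
    rw [h]
    group

theorem shift_vElt (s r : ℤ) : shift l s (vElt l r) = vElt l (s + r) := by
  rw [vElt_eq, vElt_eq, map_mul, map_mul, shift_cPrefix s r _ le_rfl, map_zpow, shift_d, shift_e,
    vElt_eq, zpow_add]
  group

theorem shift_comp (s r : ℤ) : (shift l s).comp (shift l r) = shift l (s + r) := by
  ext x
  rcases x with i | b
  · simp only [MonoidHom.comp_apply, shift_c, map_mul, map_inv,
      shift_cPrefix s r i i.2.le]
    group
  · cases b
    · simp only [MonoidHom.comp_apply, shift_d, shift_vElt]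
    · simp only [MonoidHom.comp_apply, shift_e]

theorem shift_shift (s r : ℤ) (x : FreeGroup (Gen l)) :
    shift l s (shift l r x) = shift l (s + r) x :=
  DFunLike.congr_fun (shift_comp s r) x

theorem shift_zero : shift l 0 = MonoidHom.id _ := by
  ext x
  rcases x with i | b
  · simp [shift_c, cPrefix_zero_right i.val i.2.le]
  · cases b <;> simp [shift_d, shift_e, vElt_zero]

/-! ### The HNN-extension and the action of the integers -/

/-- The subgroup `V = ⟨v_s : s ∈ ℤ⟩`. -/
abbrev V (l : ℕ) : Subgroup (FreeGroup (Gen l)) := Subgroup.closure (Set.range (vElt l))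

theorem shift_mem (s : ℤ) {x : FreeGroup (Gen l)} (hx : x ∈ V l) : shift l s x ∈ V l := by
  have h : V l ≤ (V l).comap (shift l s) := by
    rw [Subgroup.closure_le]
    rintro _ ⟨r, rfl⟩
    exact Subgroup.subset_closure ⟨s + r, (shift_vElt s r).symm⟩
  exact h hx

/-- The HNN-extension `H_V`. -/
abbrev HV (l : ℕ) : Type := HNNExtension (FreeGroup (Gen l)) (V l) (V l) (MulEquiv.refl (V l))

/-- The extension of `φ_s` to `H_V` that fixes the stable letter. -/
def shiftHNN (l : ℕ) (s : ℤ) : HV l →* HV l :=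
  HNNExtension.lift (HNNExtension.of.comp (shift l s)) HNNExtension.t fun a =>
    HNNExtension.t_mul_of (φ := MulEquiv.refl (V l)) ⟨shift l s a, shift_mem s a.2⟩

@[simp] theorem shiftHNN_of (s : ℤ) (x : FreeGroup (Gen l)) :
    shiftHNN l s (HNNExtension.of x) = HNNExtension.of (shift l s x) :=
  HNNExtension.lift_of _ _ _ x

@[simp] theorem shiftHNN_t (s : ℤ) : shiftHNN l s HNNExtension.t = HNNExtension.t :=
  HNNExtension.lift_t _ _ _

theorem shiftHNN_comp (s r : ℤ) : (shiftHNN l s).comp (shiftHNN l r) = shiftHNN l (s + r) := by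
  apply HNNExtension.hom_ext
  · apply MonoidHom.ext
    intro x
    simp [shift_shift]
  · simp

theorem shiftHNN_zero : shiftHNN l 0 = MonoidHom.id _ := by
  apply HNNExtension.hom_ext
  · apply MonoidHom.ext
    intro x
    simp [shift_zero]
  · simp

/-- The action of `ℤ` on `H_V` by the automorphisms `shiftHNN`. -/
def act (l : ℕ) : Multiplicative ℤ →* MulAut (HV l) where
  toFun s := (shiftHNN l s.toAdd).toMulEquiv (shiftHNN l (-s.toAdd))
    (by rw [shiftHNN_comp, neg_add_cancel, shiftHNN_zero])
    (by rw [shiftHNN_comp, add_neg_cancel, shiftHNN_zero])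
  map_one' := by
    ext x
    exact DFunLike.congr_fun shiftHNN_zero x
  map_mul' s r := by
    ext x
    exact (DFunLike.congr_fun (shiftHNN_comp s.toAdd r.toAdd) x).symm

theorem act_apply (s : Multiplicative ℤ) (x : HV l) : act l s x = shiftHNN l s.toAdd x := rfl

/-- The overgroup `P = H_V ⋊ ℤ`. -/
abbrev P (l : ℕ) : Type := HV l ⋊[act l] Multiplicative ℤ

/-! ### The finite presentation -/

/-- The index type of the generators of `P`: those of `H`, then `t` (`Sum.inr false`) and
`a` (`Sum.inr true`). -/
abbrev PGen (l : ℕ) : Type := Gen l ⊕ Bool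

/-- The inclusion of `H` in the free group on the generators of `P`. -/
def incl (l : ℕ) : FreeGroup (Gen l) →* FreeGroup (PGen l) := FreeGroup.map Sum.inl

/-- The letter `t` of the presentation. -/
def tGen (l : ℕ) : FreeGroup (PGen l) := FreeGroup.of (Sum.inr false)

/-- The letter `a` of the presentation. -/
def aGen (l : ℕ) : FreeGroup (PGen l) := FreeGroup.of (Sum.inr true)

/-- The relators of `P`, expressing `a x a⁻¹ = φ_1(x)` for the generators `x` of `H`,
`t a = a t` and `t d = d t`. -/
def rels (l : ℕ) : Set (FreeGroup (PGen l)) :=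
  Set.range (fun x : Gen l => aGen l * incl l (FreeGroup.of x) * (aGen l)⁻¹ *
      (incl l (shift l 1 (FreeGroup.of x)))⁻¹) ∪
    {tGen l * aGen l * (tGen l)⁻¹ * (aGen l)⁻¹,
      tGen l * incl l (FreeGroup.of (Sum.inr false)) * (tGen l)⁻¹ *
        (incl l (FreeGroup.of (Sum.inr false)))⁻¹}

theorem rels_finite : (rels l).Finite :=
  (Set.finite_range _).union (by simp)

/-- The finitely presented group on the relators `rels l`. -/
abbrev Q (l : ℕ) : Type := PresentedGroup (rels l)

theorem mk_eq_of_mem {x y : FreeGroup (PGen l)} (h : x * y⁻¹ ∈ rels l) :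
    PresentedGroup.mk (rels l) x = PresentedGroup.mk (rels l) y := by
  have := PresentedGroup.one_of_mem h
  rwa [map_mul, map_inv, mul_inv_eq_one] at this

/-! ### Relations in the presented group -/

/-- The canonical map from `H` to the presented group. -/
def hQ (l : ℕ) : FreeGroup (Gen l) →* Q l := (PresentedGroup.mk (rels l)).comp (incl l)

/-- The class of `t` in the presented group. -/
def tQ (l : ℕ) : Q l := PresentedGroup.mk (rels l) (tGen l)

/-- The class of `a` in the presented group. -/
def aQ (l : ℕ) : Q l := PresentedGroup.mk (rels l) (aGen l)

theorem tQ_aQ : Commute (tQ l) (aQ l) := by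
  have h := mk_eq_of_mem (l := l) (x := tGen l * aGen l * (tGen l)⁻¹) (y := aGen l)
    (Or.inr (Or.inl rfl))
  rwa [map_mul, map_mul, map_inv, mul_inv_eq_iff_eq_mul] at h

theorem tQ_d : Commute (tQ l) (hQ l (FreeGroup.of (Sum.inr false))) := by
  have h := mk_eq_of_mem (l := l)
    (x := tGen l * incl l (FreeGroup.of (Sum.inr false)) * (tGen l)⁻¹)
    (y := incl l (FreeGroup.of (Sum.inr false))) (Or.inr (Or.inr rfl))
  rwa [map_mul, map_mul, map_inv, mul_inv_eq_iff_eq_mul] at h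

theorem aQ_conj (x : FreeGroup (Gen l)) : aQ l * hQ l x * (aQ l)⁻¹ = hQ l (shift l 1 x) := by
  have h : (MulAut.conj (aQ l)).toMonoidHom.comp (hQ l) = (hQ l).comp (shift l 1) := by
    apply FreeGroup.ext_hom
    intro x
    have h := mk_eq_of_mem (l := l) (x := aGen l * incl l (FreeGroup.of x) * (aGen l)⁻¹)
      (y := incl l (shift l 1 (FreeGroup.of x))) (Or.inl ⟨x, rfl⟩)
    rwa [map_mul, map_mul, map_inv] at h
  simpa using DFunLike.congr_fun h x

theorem aQ_zpow_conj (s : ℤ) (x : FreeGroup (Gen l)) :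
    aQ l ^ s * hQ l x * (aQ l ^ s)⁻¹ = hQ l (shift l s x) := by
  induction s with
  | zero => simp [shift_zero]
  | succ n ih =>
    rw [add_comm, ← shift_shift, ← aQ_conj, ← ih, zpow_add]
    group
  | pred n ih =>
    have h := aQ_conj (shift l (-n - 1) x)
    rw [shift_shift, show (1 : ℤ) + (-n - 1) = -n by ring, ← ih] at h
    rw [mul_inv_eq_iff_eq_mul, ← eq_inv_mul_iff_mul_eq] at h
    rw [h, zpow_sub_one]
    group

/-- Since `v_s = a^s d a^{-s}` in the presented group, the two relations `t a = a t` and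
`t d = d t` force `t` to centralize all of `V`. -/
theorem tQ_commute {x : FreeGroup (Gen l)} (hx : x ∈ V l) : Commute (tQ l) (hQ l x) := by
  have h : V l ≤ (Subgroup.centralizer {tQ l}).comap (hQ l) := by
    rw [Subgroup.closure_le]
    rintro _ ⟨s, rfl⟩
    have hc : Commute (tQ l) (hQ l (vElt l s)) := by
      rw [← shift_d, ← aQ_zpow_conj]
      exact ((tQ_aQ.zpow_right s).mul_right tQ_d).mul_right (tQ_aQ.zpow_right s).inv_right
    exact Subgroup.mem_centralizer_singleton_iff.mpr hc.eq.symm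
  exact (Subgroup.mem_centralizer_singleton_iff.mp (h hx)).symm

/-! ### The isomorphism with the semidirect product -/

/-- The canonical map from `H_V` to the presented group. -/
def hvQ (l : ℕ) : HV l →* Q l :=
  HNNExtension.lift (hQ l) (tQ l) fun a => (tQ_commute a.2).eq

theorem hvQ_of (x : FreeGroup (Gen l)) : hvQ l (HNNExtension.of x) = hQ l x :=
  HNNExtension.lift_of _ _ _ x

theorem hvQ_t : hvQ l HNNExtension.t = tQ l :=
  HNNExtension.lift_t _ _ _

theorem hvQ_act (s : Multiplicative ℤ) :
    (hvQ l).comp (act l s).toMonoidHom =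
      (MulAut.conj (zpowersHom _ (aQ l) s)).toMonoidHom.comp (hvQ l) := by
  apply HNNExtension.hom_ext
  · apply MonoidHom.ext
    intro x
    change hvQ l (shiftHNN l s.toAdd (HNNExtension.of x)) =
      aQ l ^ s.toAdd * hvQ l (HNNExtension.of x) * (aQ l ^ s.toAdd)⁻¹
    rw [shiftHNN_of, hvQ_of, hvQ_of, aQ_zpow_conj]
  · change hvQ l (shiftHNN l s.toAdd HNNExtension.t) =
      aQ l ^ s.toAdd * hvQ l HNNExtension.t * (aQ l ^ s.toAdd)⁻¹
    rw [shiftHNN_t, hvQ_t, ← (tQ_aQ.zpow_right s.toAdd).eq, mul_inv_cancel_right]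

/-- The canonical map from `P` to the presented group. -/
def toQ (l : ℕ) : P l →* Q l :=
  SemidirectProduct.lift (hvQ l) (zpowersHom _ (aQ l)) hvQ_act

theorem toQ_inl (x : HV l) : toQ l (SemidirectProduct.inl x) = hvQ l x :=
  SemidirectProduct.lift_inl _ _ _ x

theorem toQ_inr (s : Multiplicative ℤ) :
    toQ l (SemidirectProduct.inr s) = aQ l ^ s.toAdd :=
  SemidirectProduct.lift_inr _ _ _ s

/-- The images of the generators in `P`. -/
def genP (l : ℕ) : PGen l → P l :=
  Sum.elim (fun x => SemidirectProduct.inl (HNNExtension.of (FreeGroup.of x)))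
    (fun b => if b then SemidirectProduct.inr (Multiplicative.ofAdd 1)
      else SemidirectProduct.inl HNNExtension.t)

theorem lift_genP_incl (x : FreeGroup (Gen l)) :
    FreeGroup.lift (genP l) (incl l x) = SemidirectProduct.inl (HNNExtension.of x) := by
  have h : (FreeGroup.lift (genP l)).comp (incl l) =
      SemidirectProduct.inl.comp HNNExtension.of := by
    apply FreeGroup.ext_hom
    intro x
    simp [incl, genP]
  exact DFunLike.congr_fun h x

theorem aP_conj (x : HV l) :
    (SemidirectProduct.inr (Multiplicative.ofAdd 1) * SemidirectProduct.inl x *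
      (SemidirectProduct.inr (Multiplicative.ofAdd 1))⁻¹ : P l) =
    SemidirectProduct.inl (shiftHNN l 1 x) := by
  rw [← map_inv, ← SemidirectProduct.inl_aut]
  rfl

theorem lift_genP_rels (r : FreeGroup (PGen l)) (hr : r ∈ rels l) :
    FreeGroup.lift (genP l) r = 1 := by
  have ht : FreeGroup.lift (genP l) (tGen l) = SemidirectProduct.inl HNNExtension.t := by
    simp [tGen, genP]
  have ha : FreeGroup.lift (genP l) (aGen l) =
      SemidirectProduct.inr (Multiplicative.ofAdd 1) := by
    simp [aGen, genP]
  rcases hr with ⟨x, rfl⟩ | rfl | rfl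
  · simp only [map_mul, map_inv, lift_genP_incl, ha, aP_conj, shiftHNN_of, mul_inv_cancel]
  · have h := aP_conj (l := l) HNNExtension.t
    rw [shiftHNN_t, mul_inv_eq_iff_eq_mul] at h
    rw [map_mul, map_mul, map_mul, map_inv, map_inv, ha, ht, ← h]
    group
  · have hd : FreeGroup.of (Sum.inr false) ∈ V l := Subgroup.subset_closure ⟨0, vElt_zero⟩
    have h : (HNNExtension.t * HNNExtension.of (FreeGroup.of (Sum.inr false)) : HV l) =
        HNNExtension.of (FreeGroup.of (Sum.inr false)) * HNNExtension.t :=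
      HNNExtension.t_mul_of (φ := MulEquiv.refl (V l)) ⟨_, hd⟩
    rw [map_mul, map_mul, map_mul, map_inv, map_inv, ht, lift_genP_incl, ← map_mul, h]
    simp

/-- The canonical map from the presented group to `P`. -/
def ofQ (l : ℕ) : Q l →* P l := PresentedGroup.toGroup (f := genP l) lift_genP_rels

theorem ofQ_mk (x : FreeGroup (PGen l)) :
    ofQ l (PresentedGroup.mk (rels l) x) = FreeGroup.lift (genP l) x := rfl

/-- `rels l` is a presentation of `P = H_V ⋊ ℤ`. -/
def presentation (l : ℕ) : Q l ≃* P l :=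
  (ofQ l).toMulEquiv (toQ l)
    (by
      apply PresentedGroup.ext
      intro y
      change toQ l (ofQ l (PresentedGroup.mk (rels l) (FreeGroup.of y))) =
        PresentedGroup.mk (rels l) (FreeGroup.of y)
      rw [ofQ_mk, FreeGroup.lift_apply_of]
      rcases y with x | b
      · change toQ l (SemidirectProduct.inl (HNNExtension.of (FreeGroup.of x))) = _
        rw [toQ_inl, hvQ_of]
        rfl
      · cases b
        · change toQ l (SemidirectProduct.inl HNNExtension.t) = _
          rw [toQ_inl, hvQ_t]
          rfl
        · change toQ l (SemidirectProduct.inr (Multiplicative.ofAdd 1)) = _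
          rw [toQ_inr, toAdd_ofAdd, zpow_one]
          rfl)
    (by
      apply SemidirectProduct.hom_ext
      · apply HNNExtension.hom_ext
        · apply FreeGroup.ext_hom
          intro x
          change ofQ l (toQ l (SemidirectProduct.inl (HNNExtension.of (FreeGroup.of x)))) =
            SemidirectProduct.inl (HNNExtension.of (FreeGroup.of x))
          rw [toQ_inl, hvQ_of]
          rw [hQ, MonoidHom.comp_apply, ofQ_mk, lift_genP_incl]
        · change ofQ l (toQ l (SemidirectProduct.inl HNNExtension.t)) =
            SemidirectProduct.inl HNNExtension.t
          rw [toQ_inl, hvQ_t, tQ, ofQ_mk, tGen, FreeGroup.lift_apply_of]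
          rfl
      · apply MonoidHom.ext_mint
        change ofQ l (toQ l (SemidirectProduct.inr (Multiplicative.ofAdd 1))) =
          SemidirectProduct.inr (Multiplicative.ofAdd 1)
        rw [toQ_inr, toAdd_ofAdd, zpow_one, aQ, ofQ_mk, aGen, FreeGroup.lift_apply_of]
        rfl)

theorem isFinitelyPresentedGroup_P (l : ℕ) : IsFinitelyPresentedGroup (P l) := by
  have hQ : Group.IsFinitelyPresented (Q l) :=
    Group.IsFinitelyPresented.quotient _ ⟨rels l, rels_finite, rfl⟩
  -- The generators of `P` are renumbered by `Fin n`.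
  obtain ⟨n, s, hs, ⟨e⟩⟩ := Group.IsFinitelyPresented.exists_mulEquiv_presentedGroup (G := Q l)
  exact ⟨n, s, hs, ⟨e.symm.trans (presentation l)⟩⟩

end VBenign

/-- The subgroup `V_ℤ = ⟨v_s : s ∈ ℤ⟩` is a benign subgroup of the free group on
`c₀, …, c_l, d, e`. -/
theorem vSubgroup_int_benign (l : ℕ) (hl : 4 ≤ l) :
    Benign (Subgroup.closure (Set.range (vElt l))) :=
  ⟨VBenign.P l, inferInstance, SemidirectProduct.inl, SemidirectProduct.inl_injective,
    VBenign.isFinitelyPresentedGroup_P l⟩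
end

section
/- Fix an integer l ≥ 4 and let F be the free group on the l + 6 generators a, b, c₀, …, c_l, d, e, h. For each word w on the alphabet {a, b, a⁻¹, b⁻¹}, let g_w = w h c₀^{γ(w)} c₁^{γ(w)} ⋯ c_l^{γ(w)} d e^{γ(w)} ∈ F, where γ is the Gödel numbering of words. Then the elements {g_w : w a word on {a, b, a⁻¹, b⁻¹}} freely generate a subgroup G of F; equivalently, the homomorphism from the free group on the set of all such words to F sending the generator indexed by w to g_w is injective. -/
/-!
Killing every generator except `c₀`, `d`, `e` sends `g_w` to `cⁿ d eⁿ` with `n = γ(w)`, and `γ` is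
injective because decimal expansions without the digit `0` determine their number uniquely. So it
suffices that the elements `cⁿ d eⁿ`, `n ∈ ℕ`, are free in the free group on `c`, `d`, `e`, and
then that freeness lifts back along the projection.

For the latter, play ping-pong with the left regular action, using the sets
`X n = cⁿ · {reduced words starting with d}` and `Y n = e⁻ⁿ · {reduced words starting with d⁻¹}`.
If `g ∉ Y n`, then `eⁿ g` does not start with `d⁻¹`, so `d eⁿ g` starts with `d`; hence
`cⁿ d eⁿ` maps the complement of `Y n` into `X n`, and dually for the inverse.
The sets are pairwise disjoint because multiplying a reduced word on the left by a positive power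
of a letter that does not cancel gives a word starting with that letter.
-/

universe u

/-- The Gödel numbering of words on `{a, b, a⁻¹, b⁻¹}` (letters encoded as `Fin 4`,
with `0 ↦ a, 1 ↦ b, 2 ↦ a⁻¹, 3 ↦ b⁻¹` having digits `1, 2, 3, 4`), reading a word as
the decimal number formed by concatenating the digits of its letters. -/
def godel (w : List (Fin 4)) : ℕ :=
  w.foldl (fun n i => 10 * n + (i.val + 1)) 0

/-- A letter of the alphabet `{a, b, a⁻¹, b⁻¹}` read as an element of the free group `F`
on the `l + 6` generators `a, b, c₀, …, c_l, d, e, h`; here `Sum.inl false` is `a`,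
`Sum.inl true` is `b`, `Sum.inr (Sum.inl i)` is `cᵢ`, and `Sum.inr (Sum.inr 0/1/2)` is
`d`/`e`/`h` respectively. -/
def letterElt (l : ℕ) : Fin 4 → FreeGroup (Bool ⊕ (Fin (l + 1) ⊕ Fin 3))
  | 0 => FreeGroup.of (Sum.inl false)
  | 1 => FreeGroup.of (Sum.inl true)
  | 2 => (FreeGroup.of (Sum.inl false))⁻¹
  | 3 => (FreeGroup.of (Sum.inl true))⁻¹

/-- The codeword `g_w = w h c₀^{γ(w)} c₁^{γ(w)} ⋯ c_l^{γ(w)} d e^{γ(w)}` associated to a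
word `w` on `{a, b, a⁻¹, b⁻¹}`. -/
def codeword (l : ℕ) (w : List (Fin 4)) : FreeGroup (Bool ⊕ (Fin (l + 1) ⊕ Fin 3)) :=
  (w.map (letterElt l)).prod *
    FreeGroup.of (Sum.inr (Sum.inr 2) : Bool ⊕ (Fin (l + 1) ⊕ Fin 3)) *
    (List.ofFn fun i : Fin (l + 1) =>
      (FreeGroup.of (Sum.inr (Sum.inl i) : Bool ⊕ (Fin (l + 1) ⊕ Fin 3))) ^ (godel w)).prod *
    FreeGroup.of (Sum.inr (Sum.inr 0) : Bool ⊕ (Fin (l + 1) ⊕ Fin 3)) *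
    (FreeGroup.of (Sum.inr (Sum.inr 1) : Bool ⊕ (Fin (l + 1) ⊕ Fin 3))) ^ (godel w)

open FreeGroup in
theorem pow_succ_mul_mem_startsWith {α : Type*} [DecidableEq α] {w : α × Bool} {g : FreeGroup α}
    (hg : g ∉ startsWith (w.1, !w.2)) (n : ℕ) : mk [w] ^ (n + 1) * g ∈ startsWith w := by
  induction n with
  | zero => simpa using startsWith_mk_mul g hg
  | succ n ih =>
    rw [pow_succ', mul_assoc]
    refine startsWith_mk_mul _ fun h => ?_
    have hne : w ≠ (w.1, !w.2) := fun h => by simpa using congrArg Prod.snd h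
    exact (startsWith.disjoint_iff_ne.mpr hne).notMem_of_mem_left ih h

open FreeGroup in
theorem pow_mul_notMem_startsWith {α : Type*} [DecidableEq α] {w u : α × Bool} {g : FreeGroup α}
    (hg : g ∉ startsWith (w.1, !w.2)) (hwu : w ≠ u) (hu : g ∉ startsWith u) (n : ℕ) :
    mk [w] ^ n * g ∉ startsWith u := by
  cases n with
  | zero => simpa using hu
  | succ n =>
    exact (startsWith.disjoint_iff_ne.mpr hwu).notMem_of_mem_left
      (pow_succ_mul_mem_startsWith hg n)

open FreeGroup in
theorem notMem_startsWith_of_ne {α : Type*} [DecidableEq α] {w u : α × Bool} {g : FreeGroup α}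
    (hg : g ∈ startsWith w) (hwu : w ≠ u) : g ∉ startsWith u :=
  (startsWith.disjoint_iff_ne.mpr hwu).notMem_of_mem_left hg

/-- If `v` is neither the letter `w` nor its inverse, then the translates `w⁻ⁿ · {words starting
with v}` are pairwise disjoint. -/
theorem disjoint_translates {α : Type*} [DecidableEq α] {w v : α × Bool} (h1 : w ≠ v)
    (h2 : v ≠ (w.1, !w.2)) :
    Pairwise (Function.onFun Disjoint fun n : ℕ =>
      {g : FreeGroup α | FreeGroup.mk [w] ^ n * g ∈ FreeGroup.startsWith v}) := by
  have key : ∀ n k : ℕ, ∀ g : FreeGroup α,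
      FreeGroup.mk [w] ^ n * g ∈ FreeGroup.startsWith v →
      FreeGroup.mk [w] ^ (n + k + 1) * g ∉ FreeGroup.startsWith v := by
    intro n k g hg
    rw [show n + k + 1 = (k + 1) + n by omega, pow_add, mul_assoc]
    exact notMem_startsWith_of_ne
      (pow_succ_mul_mem_startsWith (notMem_startsWith_of_ne hg h2) k) h1
  intro n m hnm
  refine Set.disjoint_left.mpr fun g hn hm => ?_
  rcases Nat.lt_or_gt_of_ne hnm with h | h
  · obtain ⟨k, rfl⟩ := Nat.exists_eq_add_of_lt h
    exact key n k g hn hm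
  · obtain ⟨k, rfl⟩ := Nat.exists_eq_add_of_lt h
    exact key m k g hm hn

/-- The elements `cⁿ d eⁿ`, `n ∈ ℕ`, are free in the free group on `c = of 0`, `d = of 1`,
`e = of 2`. -/
theorem lift_pow_mul_pow_injective :
    Function.Injective (FreeGroup.lift fun n : ℕ =>
      (FreeGroup.of 0 ^ n * FreeGroup.of 1 * FreeGroup.of 2 ^ n : FreeGroup (Fin 3))) := by
  have hinv (i : Fin 3) : (FreeGroup.mk [(i, false)])⁻¹ = FreeGroup.of i := rfl
  have hof (i : Fin 3) : FreeGroup.mk [(i, true)] = FreeGroup.of i := rfl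
  refine FreeGroup.injective_lift_of_ping_pong (α := FreeGroup (Fin 3)) _
    (fun n => {g | FreeGroup.mk [((0 : Fin 3), false)] ^ n * g ∈ FreeGroup.startsWith (1, true)})
    (fun n => {g | FreeGroup.mk [((2 : Fin 3), true)] ^ n * g ∈ FreeGroup.startsWith (1, false)})
    ?_ (disjoint_translates (by decide) (by decide)) (disjoint_translates (by decide) (by decide))
    ?_ ?_ ?_
  · intro n
    refine ⟨FreeGroup.of 0 ^ n * FreeGroup.of 1, ?_⟩
    rw [Set.mem_ofPred_eq, ← hinv 0, inv_pow, mul_inv_cancel_left]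
    simp [FreeGroup.startsWith]
  · intro n m
    refine Set.disjoint_left.mpr fun g hX hY => ?_
    rw [Set.mem_ofPred_eq] at hX hY
    -- Write `g = cⁿ x` with `x` starting with `d`; then `eᵐ cⁿ x` starts with `e`, `c` or `d`.
    obtain ⟨x, rfl⟩ : ∃ x, g = FreeGroup.mk [((0 : Fin 3), true)] ^ n * x :=
      ⟨(FreeGroup.mk [((0 : Fin 3), true)] ^ n)⁻¹ * g, by simp only [mul_inv_cancel_left]⟩
    rw [hof 0, ← hinv 0, inv_pow, mul_inv_cancel_left] at hX
    have hx (u : Fin 3 × Bool) (hu : ((1 : Fin 3), true) ≠ u) :=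
      notMem_startsWith_of_ne hX hu
    refine pow_mul_notMem_startsWith ?_ (by decide) ?_ m hY <;>
      exact pow_mul_notMem_startsWith (hx _ (by decide)) (by decide) (hx _ (by decide)) n
  · rintro n _ ⟨g, hg, rfl⟩
    have := FreeGroup.startsWith_mk_mul (w := ((1 : Fin 3), true)) _ hg
    simpa only [Set.mem_ofPred_eq, smul_eq_mul, ← hinv 0, hof 1, hof 2, inv_pow, mul_assoc,
      mul_inv_cancel_left] using this
  · rintro n _ ⟨g, hg, rfl⟩
    have := FreeGroup.startsWith_mk_mul (w := ((1 : Fin 3), false)) _ hg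
    simpa only [Set.mem_ofPred_eq, smul_eq_mul, Pi.inv_apply, ← hinv 0, ← hinv 1, hof 2, inv_pow,
      mul_inv_rev, inv_inv, mul_assoc, mul_inv_cancel_left] using this

theorem godel_concat (w : List (Fin 4)) (i : Fin 4) :
    godel (w ++ [i]) = 10 * godel w + (i.val + 1) := by
  simp [godel]

theorem godel_injective : Function.Injective godel := by
  intro w
  induction w using List.reverseRecOn with
  | nil =>
    intro v h
    rcases List.eq_nil_or_concat' v with rfl | ⟨v, j, rfl⟩
    · rfl
    · rw [godel_concat] at h
      simp [godel] at h
  | append_singleton w i ih =>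
    intro v h
    rcases List.eq_nil_or_concat' v with rfl | ⟨v, j, rfl⟩
    · rw [godel_concat] at h
      simp [godel] at h
    · rw [godel_concat, godel_concat] at h
      have hij : i = j := by omega
      have hwv : godel w = godel v := by omega
      rw [hij, ih hwv]

/-- The projection of `F` onto the free group on `c₀`, `d`, `e` (in this order) that kills all
other generators. -/
def projCDE (l : ℕ) : FreeGroup (Bool ⊕ (Fin (l + 1) ⊕ Fin 3)) →* FreeGroup (Fin 3) :=
  FreeGroup.lift (Sum.elim (fun _ => 1)
    (Sum.elim (fun i => if i = 0 then FreeGroup.of 0 else 1)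
      ![FreeGroup.of 1, FreeGroup.of 2, 1]))

theorem projCDE_codeword (l : ℕ) (w : List (Fin 4)) :
    projCDE l (codeword l w) =
      FreeGroup.of 0 ^ godel w * FreeGroup.of 1 * FreeGroup.of 2 ^ godel w := by
  have hletter (i : Fin 4) : projCDE l (letterElt l i) = 1 := by
    fin_cases i <;> simp [projCDE, letterElt]
  have hword : projCDE l (w.map (letterElt l)).prod = 1 := by
    rw [map_list_prod, List.map_map]
    exact List.prod_eq_one (by simp [hletter])
  rw [codeword]
  simp only [map_mul, hword, map_list_prod, List.map_ofFn, List.ofFn_succ, List.prod_cons]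
  rw [List.prod_eq_one (l := List.ofFn _) (by simp [List.mem_ofFn, projCDE, Fin.succ_ne_zero])]
  simp [projCDE]

/-- The codewords `g_w`, as `w` ranges over all words on `{a, b, a⁻¹, b⁻¹}`, freely
generate a subgroup of the free group `F` on `a, b, c₀, …, c_l, d, e, h`: the induced map
from the free group on the set of words is injective. -/
theorem codewords_free (l : ℕ) (hl : 4 ≤ l) :
    Function.Injective (FreeGroup.lift (codeword l) :
      FreeGroup (List (Fin 4)) →* FreeGroup (Bool ⊕ (Fin (l + 1) ⊕ Fin 3))) := by
  have hcomp : (projCDE l).comp (FreeGroup.lift (codeword l)) =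
      (FreeGroup.lift fun n : ℕ =>
        (FreeGroup.of 0 ^ n * FreeGroup.of 1 * FreeGroup.of 2 ^ n : FreeGroup (Fin 3))).comp
        (FreeGroup.map godel) := by
    ext1 w
    simp [projCDE_codeword]
  refine Function.Injective.of_comp (f := projCDE l) ?_
  rw [← MonoidHom.coe_comp, hcomp, MonoidHom.coe_comp]
  exact lift_pow_mul_pow_injective.comp (FreeGroup.map_injective godel_injective)
end

section
/- Fix an integer l ≥ 4 and let F be the free group on the l + 6 generators a, b, c₀, …, c_l, d, e, h. Let G be the subgroup of F generated by all the codewords g_w = w h c₀^{γ(w)} c₁^{γ(w)} ⋯ c_l^{γ(w)} d e^{γ(w)}, as w ranges over words on {a, b, a⁻¹, b⁻¹}. Then G is a benign subgroup of F: the HNN-extension ⟨F, t : t⁻¹gt = g for all g ∈ G⟩ embeds in a finitely presented group. -/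
/-!
For each letter `x` there is an endomorphism `φₓ` of `F` (`appendEndo`) that maps every codeword
`g_w` to `g_{wx}`. Hence the codeword subgroup `G` is the smallest subgroup that contains
`g_∅ = h d` and is stable under the four maps `φₓ`.

Suppose moreover that `φₓ` is injective and `φₓ⁻¹(G) = G`. By Britton's lemma `φₓ` then extends to
an injective endomorphism of the HNN extension `H = F_G` that fixes the stable letter `t`, and
iterated HNN extensions give a group `K ≥ H` containing elements `pₓ` that induce these
endomorphisms by conjugation. The group with generators `F`, `pₓ`, `t`, in which `pₓ` induces `φₓ`
on `F` and `t` commutes with the `pₓ` and with `g_∅`, is finitely presented. In it `t` commutes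
with all of `G`, so that `H` maps to it; it maps to `K`, and the composite is the inclusion of `H`.
So `H` embeds in it. This is `benign_of_endomorphisms`.

It remains to show that `φₓ g ∈ G` implies `g ∈ G` (`appendEndo_mem_iff`). Let `Ω = F ⧸ G`. An
action of `F` on `Fin 19 × Ω` is constructed (`divAct`) in which `φₓ g` acts on the sheet `{0} × Ω`
as `g` acts on `Ω`, and in which all codewords fix the base point `(0, G)`; so if `φₓ g ∈ G`, then
`g` fixes the coset `G`. As `φₓ` multiplies exponents by ten, up to corrections, the generators `e`
and `cⱼ` have to act as tenth roots of their original action, spread out over a ten-cycle of sheets.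
For words `w` that end in `x` the codeword fixes the base point automatically. For the other words
the base point leaves the sheet `0`, and the action of `d` off that sheet, which is still free, is
chosen to make the codeword fix it (`exists_divAct_fix`). To make the resulting conditions on `d`
independent, `e` and `c₀` use different ten-cycles of sheets, and a homomorphism `F → ℤ` that
vanishes on `G` (`weight`) shows that the conditions for different words concern different points.
-/

universe u

/-! ### Endomorphisms and HNN extensions -/

/-- The endomorphism of the HNN extension `⟨F, t : t g = g t, g ∈ G⟩` induced by an endomorphism
`φ` of `F` with `φ⁻¹(G) = G`; it fixes the stable letter. -/
def hnnMap {F : Type*} [Group F] (G : Subgroup F) (φ : F →* F) (h : ∀ g, φ g ∈ G ↔ g ∈ G) :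
    HNNExtension F G G (MulEquiv.refl G) →* HNNExtension F G G (MulEquiv.refl G) :=
  HNNExtension.lift (HNNExtension.of.comp φ) HNNExtension.t (fun a =>
    HNNExtension.t_mul_of (φ := MulEquiv.refl G) ⟨φ a, (h a).2 a.2⟩)

theorem hnnMap_of {F : Type*} [Group F] (G : Subgroup F) (φ : F →* F)
    (h : ∀ g, φ g ∈ G ↔ g ∈ G) (g : F) :
    hnnMap G φ h (HNNExtension.of g) = HNNExtension.of (φ g) :=
  HNNExtension.lift_of _ _ _ _

theorem hnnMap_t {F : Type*} [Group F] (G : Subgroup F) (φ : F →* F)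
    (h : ∀ g, φ g ∈ G ↔ g ∈ G) : hnnMap G φ h HNNExtension.t = HNNExtension.t :=
  HNNExtension.lift_t _ _ _

/-- Since `φ` reflects membership in `G`, it carries reduced words to reduced words, so that
Britton's lemma gives injectivity. -/
theorem hnnMap_injective {F : Type*} [Group F] (G : Subgroup F) (φ : F →* F)
    (h : ∀ g, φ g ∈ G ↔ g ∈ G) (hφ : Function.Injective φ) :
    Function.Injective (hnnMap G φ h) := by
  rw [injective_iff_map_eq_one]
  intro z hz
  obtain ⟨d⟩ := HNNExtension.NormalWord.TransversalPair.nonempty F G G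
  obtain ⟨w, rfl⟩ := (HNNExtension.NormalWord.equiv (MulEquiv.refl G) d).symm.surjective z
  change hnnMap G φ h (w.toReducedWord.prod (MulEquiv.refl G)) = 1 at hz
  change w.toReducedWord.prod (MulEquiv.refl G) = 1
  have hmem : ∀ (u : ℤˣ) (g : F),
      g ∈ HNNExtension.toSubgroup G G u ↔ g ∈ G := by
    intro u g
    rcases Int.units_eq_one_or u with rfl | rfl <;> rfl
  -- `w'` is the image of the normal form of `z`, reduced because `φ g ∈ G` forces `g ∈ G`.
  let w' : HNNExtension.NormalWord.ReducedWord F G G :=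
    { head := φ w.head
      toList := w.toList.map (fun x => (x.1, φ x.2))
      chain := by
        refine List.isChain_map_of_isChain _ ?_ w.chain
        intro a b hab ha
        exact hab ((hmem _ _).2 ((h _).1 ((hmem _ _).1 ha))) }
  have hw' : w'.prod (MulEquiv.refl G) = 1 := by
    rw [← hz]
    simp only [HNNExtension.NormalWord.ReducedWord.prod, w', map_mul, map_list_prod, List.map_map]
    simp [hnnMap_of, hnnMap_t, Function.comp_def]
  have hnil := HNNExtension.ReducedWord.toList_eq_nil_of_mem_of_range (MulEquiv.refl G) w'
    (by rw [hw']; exact one_mem _)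
  have hnil' : w.toList = [] := by simpa [w'] using hnil
  have hhead : φ w.head = 1 := by
    apply HNNExtension.of_injective (φ := MulEquiv.refl G)
    simpa [HNNExtension.NormalWord.ReducedWord.prod, hnil', w'] using hw'
  have : w.head = 1 := hφ (by simpa using hhead)
  simp [HNNExtension.NormalWord.ReducedWord.prod, hnil', this]

/-- Finitely many injective endomorphisms of a group become restrictions of inner automorphisms
in a larger group: iterate HNN extensions. -/
theorem exists_conj {H : Type} [Group H] (n : ℕ) (Φ : Fin n → H →* H)
    (hΦ : ∀ x, Function.Injective (Φ x)) :
    ∃ (K : Type) (_ : Group K) (j : H →* K) (p : Fin n → K), Function.Injective j ∧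
      ∀ x z, p x * j z * (p x)⁻¹ = j (Φ x z) := by
  induction n with
  | zero => exact ⟨H, inferInstance, MonoidHom.id H, fun _ => 1, fun _ _ h => h, fun x => x.elim0⟩
  | succ n ih =>
    obtain ⟨K, _, j, p, hj, hp⟩ := ih (fun x => Φ x.castSucc) (fun x => hΦ _)
    have hj' : Function.Injective (j.comp (Φ (Fin.last n))) := hj.comp (hΦ _)
    let θ := (MonoidHom.ofInjective hj).symm.trans (MonoidHom.ofInjective hj')
    have hθ : ∀ z, ((θ ⟨j z, z, rfl⟩ : (j.comp (Φ (Fin.last n))).range) : K)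
        = j (Φ (Fin.last n) z) := by
      intro z
      have : (⟨j z, z, rfl⟩ : j.range) = MonoidHom.ofInjective hj z := rfl
      rw [this]
      simp only [θ, MulEquiv.trans_apply, MulEquiv.symm_apply_apply]
      rfl
    refine ⟨HNNExtension K _ _ θ, inferInstance, HNNExtension.of.comp j,
      Fin.snoc (α := fun _ => HNNExtension K _ _ θ) (fun x => HNNExtension.of (p x))
        HNNExtension.t, ?_, ?_⟩
    · exact (HNNExtension.of_injective (φ := θ)).comp hj
    intro x z
    induction x using Fin.lastCases with
    | last =>
      have := HNNExtension.equiv_eq_conj (φ := θ) ⟨j z, z, rfl⟩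
      rw [hθ] at this
      simpa using this.symm
    | cast x =>
      simp only [Fin.snoc_castSucc, MonoidHom.comp_apply]
      rw [← map_mul, ← map_inv, ← map_mul, hp]

/-- A criterion for benignness: `G` is the smallest subgroup that contains some `g₀` and is stable
under finitely many injective endomorphisms, and `G` is its own preimage under each of these.
The finitely presented group has generators `F, p₁, …, pₙ, t`, where `pₓ` induces `φₓ` on `F`
and `t` commutes with the `pₓ` and with `g₀`. -/
theorem benign_of_endomorphisms {α : Type} [Finite α] (G : Subgroup (FreeGroup α))
    (g₀ : FreeGroup α) (hg₀ : g₀ ∈ G) (n : ℕ) (φ : Fin n → FreeGroup α →* FreeGroup α)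
    (hinj : ∀ x, Function.Injective (φ x)) (hφ : ∀ x g, φ x g ∈ G ↔ g ∈ G)
    (hmin : ∀ K : Subgroup (FreeGroup α), g₀ ∈ K → (∀ x, ∀ g ∈ K, φ x g ∈ K) → G ≤ K) :
    Benign G := by
  let ι : FreeGroup α →* FreeGroup (α ⊕ (Fin n ⊕ Unit)) := FreeGroup.map Sum.inl
  let q : Fin n → FreeGroup (α ⊕ (Fin n ⊕ Unit)) := fun x => FreeGroup.of (Sum.inr (Sum.inl x))
  let s : FreeGroup (α ⊕ (Fin n ⊕ Unit)) := FreeGroup.of (Sum.inr (Sum.inr ()))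
  let R : Set (FreeGroup (α ⊕ (Fin n ⊕ Unit))) :=
    Set.range (fun xy : Fin n × α => q xy.1 * ι (FreeGroup.of xy.2) * (q xy.1)⁻¹ *
      (ι (φ xy.1 (FreeGroup.of xy.2)))⁻¹) ∪
    (Set.range (fun x : Fin n => s * q x * s⁻¹ * (q x)⁻¹) ∪ {s * ι g₀ * s⁻¹ * (ι g₀)⁻¹})
  have hR : R.Finite := (Set.finite_range _).union ((Set.finite_range _).union (Set.finite_singleton _))
  let mk : FreeGroup (α ⊕ (Fin n ⊕ Unit)) →* PresentedGroup R := PresentedGroup.mk R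
  have hmk : ∀ r ∈ R, mk r = 1 := fun r hr => PresentedGroup.one_of_mem hr
  have h1 : ∀ x g, mk (q x) * mk (ι g) * (mk (q x))⁻¹ = mk (ι (φ x g)) := by
    intro x g
    have : (MulAut.conj (mk (q x))).toMonoidHom.comp (mk.comp ι) = (mk.comp ι).comp (φ x) := by
      ext y
      have := hmk _ (Or.inl ⟨(x, y), rfl⟩)
      simp only [map_mul, map_inv] at this
      exact mul_inv_eq_one.1 this
    exact DFunLike.congr_fun this g
  have h2 : ∀ x, mk s * mk (q x) = mk (q x) * mk s := by
    intro x
    have := hmk _ (Or.inr (Or.inl ⟨x, rfl⟩))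
    simp only [map_mul, map_inv] at this
    exact mul_inv_eq_iff_eq_mul.1 (mul_inv_eq_one.1 this)
  have h3 : mk s * mk (ι g₀) = mk (ι g₀) * mk s := by
    have := hmk _ (Or.inr (Or.inr rfl))
    simp only [map_mul, map_inv] at this
    exact mul_inv_eq_iff_eq_mul.1 (mul_inv_eq_one.1 this)
  -- The elements whose image commutes with `t` form a subgroup stable under the `φₓ`.
  have h4 : ∀ g ∈ G, mk s * mk (ι g) = mk (ι g) * mk s := by
    intro g hg
    have hle := hmin ((Subgroup.centralizer {mk s}).comap (mk.comp ι))
      (by simpa [Subgroup.mem_centralizer_singleton_iff] using h3.symm) (by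
        intro x g hg
        simp only [Subgroup.mem_comap, MonoidHom.comp_apply] at hg ⊢
        rw [← h1]
        have hq : mk (q x) ∈ Subgroup.centralizer {mk s} := by
          rw [Subgroup.mem_centralizer_singleton_iff]; exact (h2 x).symm
        exact mul_mem (mul_mem hq hg) (inv_mem hq))
    have := hle hg
    rw [Subgroup.mem_comap, Subgroup.mem_centralizer_singleton_iff] at this
    exact this.symm
  let f : HNNExtension (FreeGroup α) G G (MulEquiv.refl G) →* PresentedGroup R :=
    HNNExtension.lift (mk.comp ι) (mk s) (fun a => h4 a a.2)
  have hf : ∀ g, f (HNNExtension.of g) = mk (ι g) := fun g => HNNExtension.lift_of _ _ _ g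
  have hft : f HNNExtension.t = mk s := HNNExtension.lift_t _ _ _
  obtain ⟨K, _, j, p, hj, hp⟩ := exists_conj n (fun x => hnnMap G (φ x) (hφ x))
    (fun x => hnnMap_injective G (φ x) (hφ x) (hinj x))
  -- `PresentedGroup R` maps to `K`, and the composite with `f` is the injection `j`.
  let v : α ⊕ (Fin n ⊕ Unit) → K := Sum.elim (fun y => j (HNNExtension.of (FreeGroup.of y)))
    (Sum.elim p (fun _ => j HNNExtension.t))
  have hvι : ∀ g, FreeGroup.lift v (ι g) = j (HNNExtension.of g) := by
    intro g
    have : (FreeGroup.lift v).comp ι = j.comp HNNExtension.of := by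
      ext y; simp [ι, v]
    exact DFunLike.congr_fun this g
  have hvq : ∀ x, FreeGroup.lift v (q x) = p x := fun x => by simp [q, v]
  have hvs : FreeGroup.lift v s = j HNNExtension.t := by simp [s, v]
  have hv : ∀ r ∈ R, FreeGroup.lift v r = 1 := by
    rintro r (⟨⟨x, y⟩, rfl⟩ | ⟨x, rfl⟩ | rfl)
    · simp only [map_mul, map_inv, hvι, hvq, hp, hnnMap_of,
        mul_inv_cancel]
    · simp only [map_mul, map_inv, hvq, hvs]
      have := hp x HNNExtension.t
      simp only [hnnMap_t] at this
      rw [mul_inv_eq_one, mul_inv_eq_iff_eq_mul]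
      exact (mul_inv_eq_iff_eq_mul.1 this).symm
    · simp only [map_mul, map_inv, hvι, hvs]
      have := HNNExtension.t_mul_of (φ := MulEquiv.refl G) ⟨g₀, hg₀⟩
      rw [mul_inv_eq_one, mul_inv_eq_iff_eq_mul, ← map_mul, ← map_mul]
      exact congrArg j this
  refine ⟨PresentedGroup R, inferInstance, f, ?_, ?_⟩
  · refine Function.Injective.of_comp (f := PresentedGroup.toGroup hv) ?_
    have hmkv : ∀ y, PresentedGroup.toGroup hv (mk y) = FreeGroup.lift v y := fun _ => rfl
    have : (PresentedGroup.toGroup hv).comp f = j := by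
      refine HNNExtension.hom_ext ?_ ?_
      · ext y
        exact (congrArg (PresentedGroup.toGroup hv) (hf (FreeGroup.of y))).trans
          ((hmkv _).trans (hvι (FreeGroup.of y)))
      · exact (congrArg (PresentedGroup.toGroup hv) hft).trans ((hmkv _).trans hvs)
    rw [← MonoidHom.coe_comp, this]
    exact hj
  · have : Finite R := hR
    obtain ⟨m, S, hS, ⟨e⟩⟩ :=
      Group.IsFinitelyPresented.exists_mulEquiv_presentedGroup (G := PresentedGroup R)
    exact ⟨m, S, hS, ⟨e.symm⟩⟩


/-! ### Tenth roots of permutations -/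

/-- The label set `Fin 19` carries two `10`-cycles which meet only in the label `0`; this is the
first one, on the labels `0, …, 9`. -/
def cycleOne : Equiv.Perm (Fin 19) := List.formPerm [0, 1, 2, 3, 4, 5, 6, 7, 8, 9]

/-- The second `10`-cycle, on the labels `0, 10, …, 18`. -/
def cycleTwo : Equiv.Perm (Fin 19) := List.formPerm [0, 10, 11, 12, 13, 14, 15, 16, 17, 18]

/-- `σ ^ 10 = 1` and the label `0` has a `σ`-orbit of length exactly `10`. -/
def IsTenCycle (σ : Equiv.Perm (Fin 19)) : Prop :=
  σ ^ 10 = 1 ∧ ∀ r : Fin 10, r ≠ 0 → (σ ^ r.val) 0 ≠ 0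

theorem isTenCycle_cycleOne : IsTenCycle cycleOne := by
  unfold IsTenCycle; decide +kernel

theorem isTenCycle_cycleTwo : IsTenCycle cycleTwo := by
  unfold IsTenCycle; decide +kernel

theorem zpow_eq_fin {σ : Equiv.Perm (Fin 19)} (hσ : σ ^ 10 = 1) (k : ℤ) :
    ∃ r : Fin 10, σ ^ k = σ ^ r.val ∧ (r = 0 → (10 : ℤ) ∣ k) := by
  refine ⟨⟨(k % 10).toNat, by omega⟩, ?_, ?_⟩
  · have h1 : σ ^ k = σ ^ (k % 10) := by
      conv_lhs => rw [← Int.mul_ediv_add_emod k 10, zpow_add, zpow_mul]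
      have : σ ^ (10 : ℤ) = 1 := by exact_mod_cast hσ
      simp [this]
    rw [h1, ← zpow_natCast, Int.toNat_of_nonneg (by omega)]
  · intro h
    have := congrArg Fin.val h
    simp at this
    omega

theorem IsTenCycle.dvd {σ : Equiv.Perm (Fin 19)} (hσ : IsTenCycle σ) {k : ℤ}
    (h : (σ ^ k) 0 = 0) : (10 : ℤ) ∣ k := by
  obtain ⟨r, hr, h0⟩ := zpow_eq_fin hσ.1 k
  by_contra hk
  exact hσ.2 r (fun e => hk (h0 e)) (hr ▸ h)

theorem cycleOne_zpow_lt (k : ℤ) : (cycleOne ^ k) 0 < 10 := by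
  obtain ⟨r, hr, -⟩ := zpow_eq_fin isTenCycle_cycleOne.1 k
  rw [hr]
  have : ∀ r : Fin 10, (cycleOne ^ r.val) 0 < 10 := by decide +kernel
  exact this r

theorem cycleTwo_zpow_ge {k : ℤ} (hk : ¬ (10 : ℤ) ∣ k) : 10 ≤ (cycleTwo ^ k) 0 := by
  obtain ⟨r, hr, h0⟩ := zpow_eq_fin isTenCycle_cycleTwo.1 k
  rw [hr]
  have : ∀ r : Fin 10, r ≠ 0 → 10 ≤ (cycleTwo ^ r.val) 0 := by decide +kernel
  exact this r (fun e => hk (h0 e))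

theorem cycleOne_fix : ∀ a : Fin 19, 10 ≤ a → cycleOne a = a := by decide +kernel

/-- The permutation of `Fin 19 × Ω` that moves the labels by `σ` and applies `c` whenever the
label `0` is reached. If `σ` is a ten-cycle, its tenth power acts on the sheet `{0} × Ω` as `c`. -/
def rootPerm {Ω : Type} (σ : Equiv.Perm (Fin 19)) (c : Equiv.Perm Ω) :
    Equiv.Perm (Fin 19 × Ω) :=
  Equiv.prodShear σ (fun a => if σ a = 0 then c else 1)

theorem rootPerm_apply {Ω : Type} (σ : Equiv.Perm (Fin 19)) (c : Equiv.Perm Ω)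
    (y : Fin 19 × Ω) :
    rootPerm σ c y = (σ y.1, (if σ y.1 = 0 then c else 1 : Equiv.Perm Ω) y.2) := rfl

theorem rootPerm_zpow_fst {Ω : Type} (σ : Equiv.Perm (Fin 19)) (c : Equiv.Perm Ω) (k : ℤ)
    (y : Fin 19 × Ω) : ((rootPerm σ c ^ k) y).1 = (σ ^ k) y.1 := by
  have hinv : ∀ y, ((rootPerm σ c)⁻¹ y).1 = σ⁻¹ y.1 := by
    intro y
    obtain ⟨y, rfl⟩ := (rootPerm σ c).surjective y
    exact (congrArg Prod.fst (Equiv.symm_apply_apply (rootPerm σ c) y)).trans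
      (Equiv.symm_apply_apply σ y.1).symm
  induction k generalizing y with
  | zero => simp
  | succ k ih => rw [zpow_add_one, zpow_add_one, Equiv.Perm.mul_apply, ih]; rfl
  | pred k ih => rw [zpow_sub_one, zpow_sub_one, Equiv.Perm.mul_apply, ih, hinv]; rfl

theorem rootPerm_fix {Ω : Type} {σ : Equiv.Perm (Fin 19)} (c : Equiv.Perm Ω)
    {y : Fin 19 × Ω} (h : σ y.1 = y.1) (h0 : y.1 ≠ 0) : rootPerm σ c y = y := by
  rw [rootPerm_apply, h, if_neg h0]; rfl

theorem rootPerm_pow_ten {Ω : Type} {σ : Equiv.Perm (Fin 19)} (hσ : IsTenCycle σ)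
    (c : Equiv.Perm Ω) (z : Ω) : (rootPerm σ c ^ 10) (0, z) = (0, c z) := by
  have key : ∀ k : ℕ, k ≤ 9 → (rootPerm σ c ^ k) (0, z) = ((σ ^ k) 0, z) := by
    intro k
    induction k with
    | zero => intro; rfl
    | succ k ih =>
      intro hk
      have h0 : (σ ^ (k + 1)) 0 ≠ 0 := by
        refine hσ.2 ⟨k + 1, by omega⟩ ?_
        intro e
        exact absurd (congrArg Fin.val e) (by simp)
      rw [pow_succ', Equiv.Perm.mul_apply] at h0
      rw [pow_succ', Equiv.Perm.mul_apply, ih (by omega), rootPerm_apply, pow_succ',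
        Equiv.Perm.mul_apply, if_neg h0]
      rfl
  have h10 : σ ((σ ^ 9) 0) = 0 := by
    rw [← Equiv.Perm.mul_apply, ← pow_succ', hσ.1]; rfl
  rw [pow_succ', Equiv.Perm.mul_apply, key 9 le_rfl, rootPerm_apply, if_pos h10, h10]

theorem rootPerm_zpow_ten_mul {Ω : Type} {σ : Equiv.Perm (Fin 19)} (hσ : IsTenCycle σ)
    (c : Equiv.Perm Ω) (q : ℤ) (z : Ω) :
    (rootPerm σ c ^ (10 * q)) (0, z) = (0, (c ^ q) z) := by
  have h10 : ∀ z, (rootPerm σ c ^ (10 : ℤ)) (0, z) = (0, c z) := rootPerm_pow_ten hσ c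
  have hinv : ∀ z, (rootPerm σ c ^ (10 : ℤ))⁻¹ (0, z) = (0, c⁻¹ z) := by
    intro z
    rw [Equiv.Perm.inv_eq_iff_eq, h10]
    simp
  rw [zpow_mul]
  induction q generalizing z with
  | zero => rfl
  | succ k ih => rw [zpow_add_one, Equiv.Perm.mul_apply, h10, ih, zpow_add_one]; rfl
  | pred k ih => rw [zpow_sub_one, Equiv.Perm.mul_apply, hinv, ih, zpow_sub_one]; rfl

theorem rootPerm_zpow_return {Ω : Type} {σ : Equiv.Perm (Fin 19)} (hσ : IsTenCycle σ)
    (c : Equiv.Perm Ω) {k : ℤ} {z z' : Ω} (h : (rootPerm σ c ^ k) (0, z) = (0, z')) :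
    ∃ q, k = 10 * q ∧ (c ^ q) z = z' := by
  have h1 := congrArg Prod.fst h
  rw [rootPerm_zpow_fst] at h1
  obtain ⟨q, rfl⟩ := hσ.dvd h1
  rw [rootPerm_zpow_ten_mul hσ] at h
  exact ⟨q, rfl, congrArg Prod.snd h⟩

/-- A permutation that exchanges `P i` and `Y i` for all `i` and fixes everything else. -/
theorem exists_perm_exchange {I T : Type} (P Y : I → T) (hP : Function.Injective P)
    (hY : Function.Injective Y) (hPY : ∀ i j, P i ≠ Y j) :
    ∃ s : Equiv.Perm T, (∀ i, s (P i) = Y i) ∧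
      ∀ z, (∀ i, z ≠ P i) → (∀ i, z ≠ Y i) → s z = z := by
  classical
  let f : T → T := fun z => if h : ∃ i, z = P i then Y h.choose else
    if h : ∃ i, z = Y i then P h.choose else z
  have f1 : ∀ i, f (P i) = Y i := by
    intro i
    have h : ∃ j, P i = P j := ⟨i, rfl⟩
    simp only [f, dif_pos h]
    exact congrArg Y (hP h.choose_spec).symm
  have f2 : ∀ i, f (Y i) = P i := by
    intro i
    have h : ∃ j, Y i = Y j := ⟨i, rfl⟩
    have h' : ¬ ∃ j, Y i = P j := fun ⟨j, e⟩ => hPY j i e.symm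
    simp only [f, dif_neg h', dif_pos h]
    exact congrArg P (hY h.choose_spec).symm
  have f3 : ∀ z, (∀ i, z ≠ P i) → (∀ i, z ≠ Y i) → f z = z := by
    intro z h1 h2
    have h1' : ¬ ∃ j, z = P j := fun ⟨j, e⟩ => h1 j e
    have h2' : ¬ ∃ j, z = Y j := fun ⟨j, e⟩ => h2 j e
    simp only [f, dif_neg h1', dif_neg h2']
  have hf : Function.Involutive f := by
    intro z
    by_cases h1 : ∃ i, z = P i
    · obtain ⟨i, rfl⟩ := h1
      rw [f1, f2]
    by_cases h2 : ∃ i, z = Y i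
    · obtain ⟨i, rfl⟩ := h2
      rw [f2, f1]
    push Not at h1 h2
    rw [f3 z h1 h2, f3 z h1 h2]
  exact ⟨hf.toPerm, f1, f3⟩


/-! ### Codewords and the endomorphisms that append a letter -/

/-- The noncommutative product `f 0 * f 1 * ⋯ * f (k - 1)`. -/
def prodTo {Q : Type} [Group Q] (f : ℕ → Q) : ℕ → Q
  | 0 => 1
  | k + 1 => prodTo f k * f k

theorem prodTo_congr {Q : Type} [Group Q] {f g : ℕ → Q} {k : ℕ} (h : ∀ j < k, f j = g j) :
    prodTo f k = prodTo g k := by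
  induction k with
  | zero => rfl
  | succ k ih => rw [prodTo, prodTo, ih (fun j hj => h j (by omega)), h k (by omega)]

theorem map_prodTo {Q R : Type} [Group Q] [Group R] (θ : Q →* R) (f : ℕ → Q) (k : ℕ) :
    θ (prodTo f k) = prodTo (fun j => θ (f j)) k := by
  induction k with
  | zero => simp [prodTo]
  | succ k ih => simp [prodTo, ih]

theorem prod_ofFn_eq_prodTo {Q : Type} [Group Q] (f : ℕ → Q) (k : ℕ) :
    (List.ofFn fun j : Fin k => f j).prod = prodTo f k := by
  induction k with
  | zero => simp [prodTo]
  | succ k ih => rw [List.ofFn_succ', List.concat_eq_append, List.prod_append]; simp [prodTo, ih]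

/-- Conjugating the `j`-th factor by `f 0 ^ i * ⋯ * f (j - 1) ^ i` inserts a factor `f j ^ i` into
every block. -/
theorem prodTo_insert {Q : Type} [Group Q] (f : ℕ → Q) (i n k : ℕ) :
    prodTo (fun j => (prodTo (fun t => f t ^ i) j * f j ^ 10 * (prodTo (fun t => f t ^ i) j)⁻¹) ^ n)
      k * prodTo (fun t => f t ^ i) k = prodTo (fun j => f j ^ (10 * n + i)) k := by
  induction k with
  | zero => simp [prodTo]
  | succ k ih =>
    simp only [prodTo]
    rw [← ih, conj_pow, pow_add, pow_mul]
    group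

/-- The product `s (j - 1) ^ i * ⋯ * s 0 ^ i`. -/
def revPow {Q : Type} [Group Q] (s : ℕ → Q) (i : ℕ) : ℕ → Q
  | 0 => 1
  | k + 1 => s k ^ i * revPow s i k

theorem prodTo_conj_revPow {Q : Type} [Group Q] (s : ℕ → Q) (i k : ℕ) :
    prodTo (fun j => ((revPow s i j)⁻¹ * s j * revPow s i j) ^ i) k = revPow s i k := by
  induction k with
  | zero => rfl
  | succ k ih =>
    have := conj_pow (a := (revPow s i k)⁻¹) (b := s k) (i := i)
    rw [inv_inv] at this
    rw [prodTo, ih, this, revPow]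
    group

/-- Conjugating the `j`-th factor by `(s (j - 1) ^ i * ⋯ * s 0 ^ i)⁻¹` removes a factor `s j ^ i`
from every block. -/
theorem prodTo_conj_revPow' {Q : Type} [Group Q] (s : ℕ → Q) (i n k : ℕ) :
    prodTo (fun j => ((revPow s i j)⁻¹ * s j * revPow s i j) ^ n) k * (revPow s i k)⁻¹ =
      prodTo (fun j => s j ^ ((n : ℤ) - i)) k := by
  induction k with
  | zero => simp [prodTo, revPow]
  | succ k ih =>
    have := conj_pow (a := (revPow s i k)⁻¹) (b := s k) (i := n)
    rw [inv_inv] at this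
    rw [prodTo, this, prodTo, ← ih, revPow, zpow_sub, zpow_natCast, zpow_natCast]
    group

/-- The free group on `a, b, c₀, …, c_l, d, e, h`. -/
abbrev FG (l : ℕ) := FreeGroup (Bool ⊕ (Fin (l + 1) ⊕ Fin 3))

/-- The generator `cⱼ`, with the junk value `1` for `j > l`. -/
def cGen (l j : ℕ) : FG l :=
  if hj : j < l + 1 then FreeGroup.of (Sum.inr (Sum.inl ⟨j, hj⟩)) else 1

/-- The generator `d`. -/
def dGen (l : ℕ) : FG l := FreeGroup.of (Sum.inr (Sum.inr 0))

/-- The generator `e`. -/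
def eGen (l : ℕ) : FG l := FreeGroup.of (Sum.inr (Sum.inr 1))

/-- The generator `h`. -/
def hGen (l : ℕ) : FG l := FreeGroup.of (Sum.inr (Sum.inr 2))

theorem cGen_val (l : ℕ) (j : Fin (l + 1)) :
    cGen l j = FreeGroup.of (Sum.inr (Sum.inl j)) := by
  simp [cGen, j.is_lt]

theorem codeword_eq (l : ℕ) (w : List (Fin 4)) :
    codeword l w = (w.map (letterElt l)).prod * hGen l *
      prodTo (fun j => cGen l j ^ godel w) (l + 1) * dGen l * eGen l ^ godel w := by
  rw [← prod_ofFn_eq_prodTo]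
  simp only [cGen_val]
  rfl

theorem godel_append (w : List (Fin 4)) (x : Fin 4) :
    godel (w ++ [x]) = 10 * godel w + (x.val + 1) := by
  simp [godel]

/-- The last digit of `γ(w)` determines the last letter of `w`. -/
theorem exists_of_dvd {w : List (Fin 4)} {x : Fin 4} {q : ℤ}
    (h : (godel w : ℤ) - (x.val + 1 : ℕ) = 10 * q) :
    ∃ w', w = w' ++ [x] ∧ q = godel w' := by
  rcases List.eq_nil_or_concat w with rfl | ⟨v, y, rfl⟩
  · simp [godel] at h
    omega
  · rw [List.concat_eq_append] at h ⊢
    rw [godel_append] at h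
    push_cast at h
    exact ⟨v, by rw [show x = y by omega], by omega⟩

/-- The endomorphism of `F` that maps every codeword `g_w` to `g_{wx}`. -/
def appendEndo (l : ℕ) (x : Fin 4) : FG l →* FG l :=
  FreeGroup.lift fun
    | Sum.inl s => FreeGroup.of (Sum.inl s)
    | Sum.inr (Sum.inl j) =>
      prodTo (fun t => cGen l t ^ (x.val + 1)) j * cGen l j ^ 10 *
        (prodTo (fun t => cGen l t ^ (x.val + 1)) j)⁻¹
    | Sum.inr (Sum.inr 0) =>
      prodTo (fun t => cGen l t ^ (x.val + 1)) (l + 1) * dGen l * eGen l ^ (x.val + 1)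
    | Sum.inr (Sum.inr 1) => eGen l ^ 10
    | Sum.inr (Sum.inr 2) => letterElt l x * hGen l

section appendEndo
variable (l : ℕ) (x : Fin 4)

theorem appendEndo_inl (s : Bool) :
    appendEndo l x (FreeGroup.of (Sum.inl s)) = FreeGroup.of (Sum.inl s) :=
  FreeGroup.lift_apply_of

theorem appendEndo_letter (y : Fin 4) : appendEndo l x (letterElt l y) = letterElt l y := by
  fin_cases y <;> simp [letterElt, appendEndo_inl]

theorem appendEndo_c {j : ℕ} (hj : j < l + 1) : appendEndo l x (cGen l j) =
    prodTo (fun t => cGen l t ^ (x.val + 1)) j * cGen l j ^ 10 *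
        (prodTo (fun t => cGen l t ^ (x.val + 1)) j)⁻¹ := by
  rw [cGen_val l ⟨j, hj⟩]
  refine FreeGroup.lift_apply_of.trans ?_
  rw [← cGen_val]

theorem appendEndo_d : appendEndo l x (dGen l) =
    prodTo (fun t => cGen l t ^ (x.val + 1)) (l + 1) * dGen l * eGen l ^ (x.val + 1) :=
  FreeGroup.lift_apply_of

theorem appendEndo_e : appendEndo l x (eGen l) = eGen l ^ 10 := FreeGroup.lift_apply_of

theorem appendEndo_h : appendEndo l x (hGen l) = letterElt l x * hGen l := FreeGroup.lift_apply_of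

theorem appendEndo_codeword (w : List (Fin 4)) :
    appendEndo l x (codeword l w) = codeword l (w ++ [x]) := by
  have hw : appendEndo l x (w.map (letterElt l)).prod = (w.map (letterElt l)).prod := by
    rw [map_list_prod, List.map_map]
    simp only [Function.comp_def, appendEndo_letter]
  rw [codeword_eq, codeword_eq, godel_append, ← prodTo_insert]
  simp only [map_mul, map_pow, hw, map_prodTo, appendEndo_d, appendEndo_e, appendEndo_h]
  rw [prodTo_congr (g := fun j => (prodTo (fun t => cGen l t ^ (x.val + 1)) j * cGen l j ^ 10 *
        (prodTo (fun t => cGen l t ^ (x.val + 1)) j)⁻¹) ^ godel w)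
        (fun j hj => by rw [appendEndo_c l x hj])]
  rw [List.map_append, List.prod_append, List.map_singleton, List.prod_singleton,
    add_comm (10 * godel w), pow_add _ _ (10 * godel w), pow_mul]
  simp only [mul_assoc]

end appendEndo

/-- The codeword subgroup. -/
abbrev codeSubgroup (l : ℕ) : Subgroup (FG l) := Subgroup.closure (Set.range (codeword l))

/-- The exponent sum of `c₀` minus the exponent sum of `e`; it vanishes on codewords. -/
def weight (l : ℕ) : FG l →* Multiplicative ℤ :=
  FreeGroup.lift fun
    | Sum.inl _ => 1
    | Sum.inr (Sum.inl j) => if j = 0 then Multiplicative.ofAdd 1 else 1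
    | Sum.inr (Sum.inr 0) => 1
    | Sum.inr (Sum.inr 1) => Multiplicative.ofAdd (-1)
    | Sum.inr (Sum.inr 2) => 1

theorem weight_letter (l : ℕ) (y : Fin 4) : weight l (letterElt l y) = 1 := by
  fin_cases y <;> simp [letterElt, weight]

theorem weight_word (l : ℕ) (w : List (Fin 4)) : weight l (w.map (letterElt l)).prod = 1 := by
  rw [map_list_prod, List.map_map]
  simp [Function.comp_def, weight_letter]

theorem weight_h (l : ℕ) : weight l (hGen l) = 1 := FreeGroup.lift_apply_of
theorem weight_d (l : ℕ) : weight l (dGen l) = 1 := FreeGroup.lift_apply_of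
theorem weight_e (l : ℕ) : weight l (eGen l) = Multiplicative.ofAdd (-1) := FreeGroup.lift_apply_of

theorem weight_c_zero (l : ℕ) : weight l (cGen l 0) = Multiplicative.ofAdd 1 := by
  simp [cGen, weight]

theorem weight_c_succ (l j : ℕ) : weight l (cGen l (j + 1)) = 1 := by
  by_cases hj : j < l <;> simp [cGen, weight, hj]

theorem weight_codeword (l : ℕ) (w : List (Fin 4)) : weight l (codeword l w) = 1 := by
  have hC : ∀ n k : ℕ, weight l (prodTo (fun j => cGen l j ^ n) (k + 1)) =
      Multiplicative.ofAdd (1 : ℤ) ^ n := by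
    intro n k
    induction k with
    | zero => simp [prodTo, weight_c_zero]
    | succ k ih => rw [prodTo, map_mul, ih]; simp [weight_c_succ]
  rw [codeword_eq]
  simp only [map_mul, map_pow, weight_word, weight_h, weight_d, weight_e, hC]
  simp

theorem weight_of_mem {l : ℕ} {g : FG l} (hg : g ∈ codeSubgroup l) : weight l g = 1 := by
  have : codeSubgroup l ≤ (weight l).ker := by
    rw [Subgroup.closure_le]
    rintro _ ⟨w, rfl⟩
    exact weight_codeword l w
  exact this hg


/-! ### The action that divides exponents by ten -/

section action
variable {l : ℕ} {Ω : Type} [MulAction (FG l) Ω]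

/-- The action of `F` on all sheets of `Fin 19 × Ω` simultaneously. -/
def diagAct (l : ℕ) (Ω : Type) [MulAction (FG l) Ω] : FG l →* Equiv.Perm (Fin 19 × Ω) where
  toFun g := Equiv.prodCongr (Equiv.refl _) (MulAction.toPerm g)
  map_one' := by ext y <;> simp
  map_mul' g g' := by ext y <;> simp [mul_smul]

theorem diagAct_apply (g : FG l) (y : Fin 19 × Ω) : diagAct l Ω g y = (y.1, g • y.2) := rfl

/-- A permutation whose tenth power acts on the sheet `{0} × Ω` as `cⱼ`; only for `j = 0` does it
use the second cycle of labels. Junk for `j > l`, where `cGen l j = 1`. -/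
def cRoot (l : ℕ) (Ω : Type) [MulAction (FG l) Ω] (j : ℕ) : Equiv.Perm (Fin 19 × Ω) :=
  rootPerm (if j = 0 then cycleTwo else cycleOne) (MulAction.toPerm (cGen l j))

/-- A permutation whose tenth power acts on the sheet `{0} × Ω` as `e`, along the first cycle of
labels. -/
def eRoot (l : ℕ) (Ω : Type) [MulAction (FG l) Ω] : Equiv.Perm (Fin 19 × Ω) :=
  rootPerm cycleOne (MulAction.toPerm (eGen l))

theorem toPerm_zpow (g : FG l) (q : ℤ) (z : Ω) :
    ((MulAction.toPerm g : Equiv.Perm Ω) ^ q) z = g ^ q • z := by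
  have := map_zpow (MulAction.toPermHom (FG l) Ω) g q
  exact (DFunLike.congr_fun this z).symm

theorem isTenCycle_ite (j : ℕ) : IsTenCycle (if j = 0 then cycleTwo else cycleOne) := by
  split_ifs
  exacts [isTenCycle_cycleTwo, isTenCycle_cycleOne]

theorem cRoot_zpow (j : ℕ) (q : ℤ) (z : Ω) :
    (cRoot l Ω j ^ (10 * q)) (0, z) = (0, cGen l j ^ q • z) := by
  rw [cRoot, rootPerm_zpow_ten_mul (isTenCycle_ite j), toPerm_zpow]

theorem eRoot_zpow (q : ℤ) (z : Ω) :
    (eRoot l Ω ^ (10 * q)) (0, z) = (0, eGen l ^ q • z) := by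
  rw [eRoot, rootPerm_zpow_ten_mul isTenCycle_cycleOne, toPerm_zpow]

/-- An action of `F` on `Fin 19 × Ω` whose restriction along `appendEndo l x` agrees on the sheet
`{0} × Ω` with the given action on `Ω`, provided that `D` acts there as `d`. The values of `D` on
the other sheets are free. -/
def divAct (x : Fin 4) (D : Equiv.Perm (Fin 19 × Ω)) : FG l →* Equiv.Perm (Fin 19 × Ω) :=
  FreeGroup.lift fun
    | Sum.inl s => diagAct l Ω (FreeGroup.of (Sum.inl s))
    | Sum.inr (Sum.inl j) =>
      (revPow (cRoot l Ω) (x.val + 1) j)⁻¹ * cRoot l Ω j * revPow (cRoot l Ω) (x.val + 1) j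
    | Sum.inr (Sum.inr 0) =>
      (revPow (cRoot l Ω) (x.val + 1) (l + 1))⁻¹ * D * (eRoot l Ω ^ (x.val + 1))⁻¹
    | Sum.inr (Sum.inr 1) => eRoot l Ω
    | Sum.inr (Sum.inr 2) => (diagAct l Ω (letterElt l x))⁻¹ * diagAct l Ω (hGen l)

variable (x : Fin 4) (D : Equiv.Perm (Fin 19 × Ω))

theorem divAct_inl (s : Bool) : divAct (l := l) x D (FreeGroup.of (Sum.inl s)) =
    diagAct l Ω (FreeGroup.of (Sum.inl s)) := FreeGroup.lift_apply_of

theorem divAct_letter (y : Fin 4) : divAct x D (letterElt l y) = diagAct l Ω (letterElt l y) := by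
  fin_cases y <;> simp [letterElt, divAct_inl]

theorem divAct_c {j : ℕ} (hj : j < l + 1) : divAct x D (cGen l j) =
    (revPow (cRoot l Ω) (x.val + 1) j)⁻¹ * cRoot l Ω j * revPow (cRoot l Ω) (x.val + 1) j := by
  rw [cGen_val l ⟨j, hj⟩]
  exact FreeGroup.lift_apply_of

theorem divAct_d : divAct x D (dGen l) =
    (revPow (cRoot l Ω) (x.val + 1) (l + 1))⁻¹ * D * (eRoot l Ω ^ (x.val + 1))⁻¹ :=
  FreeGroup.lift_apply_of

theorem divAct_e : divAct x D (eGen l) = eRoot l Ω := FreeGroup.lift_apply_of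

theorem divAct_h : divAct x D (hGen l) =
    (diagAct l Ω (letterElt l x))⁻¹ * diagAct l Ω (hGen l) := FreeGroup.lift_apply_of

theorem divAct_prodTo {k : ℕ} (hk : k ≤ l + 1) :
    divAct x D (prodTo (fun t => cGen l t ^ (x.val + 1)) k) =
      revPow (cRoot l Ω) (x.val + 1) k := by
  rw [map_prodTo, ← prodTo_conj_revPow]
  exact prodTo_congr fun j hj => by rw [map_pow, divAct_c x D (by omega)]

theorem divAct_appendEndo (hD : ∀ z, D (0, z) = (0, dGen l • z)) (g : FG l) (z : Ω) :
    divAct x D (appendEndo l x g) (0, z) = (0, g • z) := by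
  induction g using FreeGroup.induction_on generalizing z with
  | C1 => simp
  | of y =>
    rcases y with s | j | k
    · rw [appendEndo_inl, divAct_inl]; rfl
    · have h10 := cRoot_zpow (l := l) j 1 z
      rw [← cGen_val, appendEndo_c l x j.is_lt]
      simp only [map_mul, map_inv, map_pow, divAct_prodTo x D j.is_lt.le, divAct_c x D j.is_lt]
      have := conj_pow (a := (revPow (cRoot l Ω) (x.val + 1) j)⁻¹) (b := cRoot l Ω j) (i := 10)
      rw [inv_inv] at this
      rw [this]
      have hg : ∀ v s : Equiv.Perm (Fin 19 × Ω), v * (v⁻¹ * s * v) * v⁻¹ = s := by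
        intros; group
      rw [hg]
      simpa using h10
    · fin_cases k
      · change divAct x D (appendEndo l x (dGen l)) (0, z) = (0, dGen l • z)
        rw [appendEndo_d, ← hD]
        simp only [map_mul, map_pow, divAct_prodTo x D le_rfl, divAct_d, divAct_e]
        congr 1
        group
      · change divAct x D (appendEndo l x (eGen l)) (0, z) = (0, eGen l • z)
        have h10 := eRoot_zpow (l := l) 1 z
        rw [appendEndo_e, map_pow, divAct_e]
        simpa using h10
      · change divAct x D (appendEndo l x (hGen l)) (0, z) = (0, hGen l • z)
        rw [appendEndo_h, map_mul, divAct_letter, divAct_h, mul_inv_cancel_left]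
        rfl
  | inv_of y ih =>
    rw [map_inv, map_inv, Equiv.Perm.inv_eq_iff_eq, ih, smul_inv_smul]
  | mul g g' ih ih' => rw [map_mul, map_mul, Equiv.Perm.mul_apply, ih', ih, mul_smul]

/-- The corrections in `divAct` cancel the last digit: `g_w` acts like the codeword of `w` with the
letter `x` removed and with all exponents `γ(w) - γ(x)`, the `cⱼ` and `e` being replaced by their
tenth roots. -/
theorem divAct_codeword (w : List (Fin 4)) : divAct x D (codeword l w) =
    diagAct l Ω ((w.map (letterElt l)).prod * (letterElt l x)⁻¹ * hGen l) *
      prodTo (fun j => cRoot l Ω j ^ ((godel w : ℤ) - (x.val + 1 : ℕ))) (l + 1) * D *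
      eRoot l Ω ^ ((godel w : ℤ) - (x.val + 1 : ℕ)) := by
  have hw : divAct x D (w.map (letterElt l)).prod =
      diagAct l Ω (w.map (letterElt l)).prod := by
    rw [map_list_prod, List.map_map, map_list_prod, List.map_map]
    simp only [Function.comp_def, divAct_letter]
  rw [codeword_eq, ← prodTo_conj_revPow', zpow_sub, zpow_natCast, zpow_natCast]
  simp only [map_mul, map_inv, map_pow, hw, map_prodTo, divAct_d, divAct_e, divAct_h]
  rw [prodTo_congr (fun j hj => by rw [divAct_c x D hj])]
  group

end action

/-- Applying `divAct` over the regular action of `F` recovers `g` from its image. -/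
theorem appendEndo_injective (l : ℕ) (x : Fin 4) : Function.Injective (appendEndo l x) := by
  rw [injective_iff_map_eq_one]
  intro g hg
  have := divAct_appendEndo (Ω := FG l) x (diagAct l _ (dGen l)) (fun z => rfl) g 1
  rw [hg] at this
  simpa using this.symm

theorem prodTo_cRoot_zpow (l : ℕ) (Ω : Type) [MulAction (FG l) Ω] (q : ℤ) (k : ℕ) (z : Ω) :
    prodTo (fun j => cRoot l Ω j ^ (10 * q)) k (0, z) = (0, prodTo (fun j => cGen l j ^ q) k • z) := by
  induction k generalizing z with
  | zero => simp [prodTo]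
  | succ k ih => rw [prodTo, Equiv.Perm.mul_apply, cRoot_zpow, ih, prodTo, mul_smul]

/-- Only the `c₀`-block moves points whose label lies on the second cycle. -/
theorem prodTo_cRoot_zpow_of_ge (l : ℕ) (Ω : Type) [MulAction (FG l) Ω] (m : ℤ) (k : ℕ)
    (y : Fin 19 × Ω) (hy : 10 ≤ y.1) :
    prodTo (fun j => cRoot l Ω j ^ m) (k + 1) y = (cRoot l Ω 0 ^ m) y := by
  induction k with
  | zero => simp [prodTo]
  | succ k ih =>
    have h0 : y.1 ≠ 0 := by intro h; rw [h] at hy; exact absurd hy (by decide)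
    rw [prodTo, Equiv.Perm.mul_apply, Equiv.Perm.zpow_apply_eq_self_of_apply_eq_self, ih]
    rw [cRoot, if_neg (Nat.succ_ne_zero k)]
    exact rootPerm_fix _ (cycleOne_fix _ hy) h0

/-- The action on `Fin 19 × F ⧸ G` can be chosen so that all codewords fix the base point
`(0, G)`. For a codeword `g_w` with `γ(w) = 10 q + x + 1` this is automatic. Every other codeword
requires `D` to send one point `P w` on the first cycle of sheets to one point `Y w` on the second
cycle, and these requirements do not interfere. -/
theorem exists_divAct_fix (l : ℕ) (x : Fin 4) :
    ∃ D : Equiv.Perm (Fin 19 × (FG l ⧸ codeSubgroup l)), (∀ z, D (0, z) = (0, dGen l • z)) ∧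
      ∀ w, divAct x D (codeword l w) (0, ((1 : FG l) : FG l ⧸ codeSubgroup l)) =
        (0, ((1 : FG l) : FG l ⧸ codeSubgroup l)) := by
  set Ω := FG l ⧸ codeSubgroup l
  let o : Ω := ((1 : FG l) : FG l ⧸ codeSubgroup l)
  let m : List (Fin 4) → ℤ := fun w => (godel w : ℤ) - (x.val + 1 : ℕ)
  let ww : List (Fin 4) → FG l := fun w =>
    (w.map (letterElt l)).prod * (letterElt l x)⁻¹ * hGen l
  have hww : ∀ w, weight l (ww w)⁻¹ = 1 := by
    intro w
    simp [ww, weight_word, weight_letter, weight_h]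
  let I := {w : List (Fin 4) // ¬ (10 : ℤ) ∣ m w}
  let P : I → Fin 19 × Ω := fun w => (eRoot l Ω ^ m w) (0, o)
  let Y : I → Fin 19 × Ω := fun w => (cRoot l Ω 0 ^ (-m w)) (0, (ww w)⁻¹ • o)
  have hPl : ∀ w, (P w).1 < 10 := fun w => by
    simp only [P, eRoot, rootPerm_zpow_fst]
    exact cycleOne_zpow_lt _
  have hP0 : ∀ w, (P w).1 ≠ 0 := fun w h => by
    simp only [P, eRoot, rootPerm_zpow_fst] at h
    exact w.2 (isTenCycle_cycleOne.dvd h)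
  have hYl : ∀ w, 10 ≤ (Y w).1 := fun w => by
    simp only [Y, cRoot, rootPerm_zpow_fst]
    exact cycleTwo_zpow_ge (by rw [Int.dvd_neg]; exact w.2)
  have hm : ∀ w v : I, m w = m v → w = v := by
    intro w v h
    exact Subtype.ext (godel_injective (by simp only [m] at h; omega))
  -- A coincidence among the `P w` puts a nonzero power of `e` into the codeword subgroup, and one
  -- among the `Y w` an element of nonzero weight; both contradict `weight_of_mem`.
  have hPinj : Function.Injective P := by
    intro w v h
    have h' : (eRoot l Ω ^ (m w - m v)) (0, o) = (0, o) := by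
      rw [sub_eq_neg_add, zpow_add, Equiv.Perm.mul_apply]
      change (eRoot l Ω ^ (-m v)) (P w) = _
      rw [h, ← Equiv.Perm.mul_apply, ← zpow_add]
      simp
    obtain ⟨q, hq, hz⟩ := rootPerm_zpow_return isTenCycle_cycleOne _ h'
    rw [toPerm_zpow] at hz
    have hmem : eGen l ^ q ∈ codeSubgroup l := by
      have := QuotientGroup.eq.1 hz
      simpa using this
    have := weight_of_mem hmem
    rw [map_zpow, weight_e, ← ofAdd_zsmul, ofAdd_eq_one] at this
    simp at this
    exact hm _ _ (by omega)
  have hYinj : Function.Injective Y := by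
    intro w v h
    have h' : (cRoot l Ω 0 ^ (m v - m w)) (0, (ww w)⁻¹ • o) = (0, (ww v)⁻¹ • o) := by
      rw [sub_eq_add_neg, zpow_add, Equiv.Perm.mul_apply]
      change (cRoot l Ω 0 ^ (m v)) (Y w) = _
      rw [h, ← Equiv.Perm.mul_apply, ← zpow_add]
      simp
    obtain ⟨q, hq, hz⟩ := rootPerm_zpow_return (isTenCycle_ite 0) _ h'
    rw [toPerm_zpow] at hz
    have hmem : (cGen l 0 ^ q * (ww w)⁻¹)⁻¹ * (ww v)⁻¹ ∈ codeSubgroup l := by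
      rw [smul_smul] at hz
      have := QuotientGroup.eq.1 hz
      simpa using this
    have := weight_of_mem hmem
    rw [map_mul, map_inv, map_mul, hww, hww, map_zpow, weight_c_zero, mul_one, mul_one,
      inv_eq_one, ← ofAdd_zsmul, ofAdd_eq_one] at this
    simp at this
    exact hm _ _ (by omega)
  obtain ⟨s, hs1, hs2⟩ := exists_perm_exchange P Y hPinj hYinj (fun w v h => by
    have h1 := hPl w
    rw [h] at h1
    exact absurd (hYl v) (not_le.2 h1))
  -- `d` acts on the sheet `0`, and `s` on the others.
  let D₀ : Equiv.Perm (Fin 19 × Ω) := Equiv.prodShear (Equiv.refl _)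
    (fun a => if a = 0 then MulAction.toPerm (dGen l) else 1)
  have hD₀ : ∀ z, D₀ (0, z) = (0, dGen l • z) := fun z => rfl
  have hD₀' : ∀ y, y.1 ≠ 0 → D₀ y = y := by
    intro y hy
    change (y.1, (if y.1 = 0 then MulAction.toPerm (dGen l) else 1 : Equiv.Perm Ω) y.2) = y
    rw [if_neg hy]; rfl
  have hD : ∀ z, (s * D₀) (0, z) = (0, dGen l • z) := by
    intro z
    rw [Equiv.Perm.mul_apply, hD₀, hs2]
    · intro w h
      exact hP0 w (congrArg Prod.fst h).symm
    · intro w h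
      have h10 : (10 : Fin 19) ≤ 0 := by
        have := hYl w
        rwa [← h] at this
      exact absurd h10 (by decide)
  have ho : ∀ g ∈ codeSubgroup l, g • o = o := by
    intro g hg
    exact QuotientGroup.eq.2 (by simpa using hg)
  refine ⟨s * D₀, hD, fun w => ?_⟩
  change divAct x (s * D₀) (codeword l w) (0, o) = (0, o)
  rw [divAct_codeword]
  change (diagAct l Ω (ww w) * prodTo (fun j => cRoot l Ω j ^ m w) (l + 1) * (s * D₀) *
    eRoot l Ω ^ m w) (0, o) = (0, o)
  by_cases hw : (10 : ℤ) ∣ m w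
  -- If `w = v ++ [x]`, everything stays on the sheet `0`, where `g_w` acts as `g_v`.
  · obtain ⟨q, hq⟩ := hw
    obtain ⟨v, rfl, rfl⟩ := exists_of_dvd hq
    rw [hq, Equiv.Perm.mul_apply, eRoot_zpow, Equiv.Perm.mul_apply, hD, Equiv.Perm.mul_apply,
      prodTo_cRoot_zpow, diagAct_apply]
    simp only [smul_smul, ww]
    refine Prod.ext rfl (Eq.trans ?_ (ho (codeword l v) (Subgroup.subset_closure ⟨v, rfl⟩)))
    rw [codeword_eq]
    simp [mul_assoc]
  -- Otherwise the `e`-block moves the base point to `P w`, which `s` sends to `Y w`.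
  · have hP : (eRoot l Ω ^ m w) (0, o) = P ⟨w, hw⟩ := rfl
    rw [Equiv.Perm.mul_apply, hP, Equiv.Perm.mul_apply, Equiv.Perm.mul_apply s,
      hD₀' _ (hP0 _), hs1, Equiv.Perm.mul_apply, prodTo_cRoot_zpow_of_ge _ _ _ _ _ (hYl _)]
    simp only [Y]
    rw [← Equiv.Perm.mul_apply (cRoot l Ω 0 ^ m w), ← zpow_add, add_neg_cancel, zpow_zero,
      Equiv.Perm.one_apply, diagAct_apply, smul_inv_smul]

/-- The nontrivial direction: if `φ g ∈ G`, where `φ` is `appendEndo l x`, then `φ g` fixes the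
point `(0, G)` under `divAct`; but it acts there as `g`, so `g` fixes the coset `G`. -/
theorem appendEndo_mem_iff (l : ℕ) (x : Fin 4) (g : FG l) :
    appendEndo l x g ∈ codeSubgroup l ↔ g ∈ codeSubgroup l := by
  constructor
  · intro hg
    obtain ⟨D, hD, hfix⟩ := exists_divAct_fix l x
    have hle : codeSubgroup l ≤ (MulAction.stabilizer (Equiv.Perm (Fin 19 × (FG l ⧸ codeSubgroup l)))
        ((0, ((1 : FG l) : FG l ⧸ codeSubgroup l)) : Fin 19 × (FG l ⧸ codeSubgroup l))).comap
          (divAct x D) := by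
      rw [Subgroup.closure_le]
      rintro _ ⟨w, rfl⟩
      exact hfix w
    have h1 : divAct x D (appendEndo l x g) (0, ((1 : FG l) : FG l ⧸ codeSubgroup l)) =
        (0, ((1 : FG l) : FG l ⧸ codeSubgroup l)) := hle hg
    rw [divAct_appendEndo x D hD] at h1
    have h2 := QuotientGroup.eq.1 (congrArg Prod.snd h1)
    simpa using h2
  · intro hg
    have hle : codeSubgroup l ≤ (codeSubgroup l).comap (appendEndo l x) := by
      rw [Subgroup.closure_le]
      rintro _ ⟨w, rfl⟩
      change appendEndo l x (codeword l w) ∈ codeSubgroup l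
      rw [appendEndo_codeword]
      exact Subgroup.subset_closure ⟨_, rfl⟩
    exact hle hg

/-- The subgroup `G` of `F` generated by all the codewords `g_w` is a benign subgroup
of `F`. -/
theorem codeword_subgroup_benign (l : ℕ) (hl : 4 ≤ l) :
    Benign (Subgroup.closure (Set.range (codeword l))) := by
  refine benign_of_endomorphisms _ (codeword l []) (Subgroup.subset_closure ⟨[], rfl⟩) 4
    (appendEndo l) (appendEndo_injective l) (appendEndo_mem_iff l) ?_
  intro K h0 hK
  rw [Subgroup.closure_le]
  rintro _ ⟨w, rfl⟩
  induction w using List.reverseRecOn with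
  | nil => exact h0
  | append_singleton w x ih =>
    rw [← appendEndo_codeword]
    exact hK x _ ih
end

section
/- Fix an integer l ≥ 13 and a set S of integers with 0 ∈ S, and let J'(l, S) be the group with presentation ⟨j₁, …, j_l : j₁^s j₂^s ⋯ j_l^s = 1 for each s ∈ S⟩. Then for every integer s ∉ S, the element j₁^s j₂^s ⋯ j_l^s is not equal to the identity in J'(l, S). -/
/-!
It suffices to map the presented group to a group `G` in which `∏ gᵢ ^ t = 1` for all `t ≠ s` while
`∏ gᵢ ^ s ≠ 1`; no small cancellation theory is needed. If `b` and `c` commute, the commutator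
`⁅a⁻ᵗ b aᵗ, c⁆` is a product of `t`-th powers of four elements not depending on `t`, namely `a⁻¹`
and conjugates of `a`, `a⁻¹`, `a` (`prod_fourGens_zpow`). Padding with the identity gives `l`
elements.

Now take the unrestricted wreath product of `S₃` with `ℤ`, acting on `ℤ × Fin 3`: `a` is the shift,
and `b`, `c` are two noncommuting transpositions placed in the fibres over `0` and `-s`. Then
`a⁻ᵗ b aᵗ` lives in the fibre over `-t`, so it commutes with `c` exactly when `t ≠ s`. Since
`0 ∈ S`, we have `s ≠ 0`, so that `b` and `c` themselves commute.
-/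

open scoped commutatorElement

/-- The elements whose `t`-th powers multiply to `⁅a⁻ᵗ b aᵗ, c⁆`, padded by the identity. -/
def fourGens {G : Type*} [Group G] (a b c : G) : ℕ → G
  | 0 => a⁻¹
  | 1 => b * a * b⁻¹
  | 2 => (b * c) * a⁻¹ * (b * c)⁻¹
  | 3 => (b * c * b⁻¹) * a * (b * c * b⁻¹)⁻¹
  | _ + 4 => 1

lemma prod_fourGens_zpow {G : Type*} [Group G] {a b c : G} (hbc : Commute b c) {l : ℕ}
    (hl : 4 ≤ l) (t : ℤ) :
    (List.ofFn fun i : Fin l => fourGens a b c i ^ t).prod = ⁅(a ^ t)⁻¹ * b * a ^ t, c⁆ := by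
  obtain ⟨m, rfl⟩ := Nat.exists_eq_add_of_le' hl
  have hinv : b * c⁻¹ * b⁻¹ = c⁻¹ := by
    rw [hbc.inv_right.eq, mul_inv_cancel_right]
  have hpad : (List.ofFn fun i : Fin m => fourGens a b c (i + 4) ^ t).prod = 1 := by
    simp [fourGens]
  simp only [List.ofFn_succ, List.prod_cons, Fin.val_zero, Fin.val_succ, zero_add, Nat.reduceAdd,
    add_assoc, hpad]
  simp only [fourGens, conj_zpow, inv_zpow, commutatorElement_def]
  calc _ = (a ^ t)⁻¹ * b * a ^ t * c * (a ^ t)⁻¹ * b⁻¹ * a ^ t * (b * c⁻¹ * b⁻¹) := by group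
    _ = _ := by rw [hinv]; group

/-- The shift of the base of `ℤ × Fin 3`. -/
def baseShift : Equiv.Perm (ℤ × Fin 3) := Equiv.prodCongr (Equiv.addRight 1) (Equiv.refl _)

/-- The base group of the wreath product: permutations of `ℤ × Fin 3` preserving each fibre. -/
def fibrewise : (ℤ → Equiv.Perm (Fin 3)) →* Equiv.Perm (ℤ × Fin 3) where
  toFun f := Equiv.prodShear (Equiv.refl _) f
  map_one' := by ext1 x; rfl
  map_mul' f g := by ext1 x; rfl

lemma fibrewise_injective : Function.Injective fibrewise := by
  intro f g h
  funext n
  ext1 y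
  exact congrArg Prod.snd (DFunLike.congr_fun h (n, y))

lemma baseShift_zpow_apply (t : ℤ) (x : ℤ × Fin 3) : (baseShift ^ t) x = (x.1 + t, x.2) := by
  induction t generalizing x with
  | zero => simp
  | succ i ih =>
    rw [zpow_add_one, Equiv.Perm.mul_apply, ih]
    simp [baseShift, add_comm, add_left_comm]
  | pred i ih =>
    rw [zpow_sub_one, Equiv.Perm.mul_apply, ih]
    simp [baseShift, Equiv.Perm.inv_def, add_comm, add_left_comm, sub_eq_add_neg]

lemma conj_fibrewise (t : ℤ) (f : ℤ → Equiv.Perm (Fin 3)) :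
    (baseShift ^ t)⁻¹ * fibrewise f * baseShift ^ t = fibrewise fun n => f (n + t) := by
  rw [mul_assoc, inv_mul_eq_iff_eq_mul]
  ext1 x
  simp only [Equiv.Perm.mul_apply, baseShift_zpow_apply]
  simp [fibrewise]

lemma conj_fibrewise_mulSingle (t : ℤ) (σ : Equiv.Perm (Fin 3)) :
    (baseShift ^ t)⁻¹ * fibrewise (Pi.mulSingle 0 σ) * baseShift ^ t
      = fibrewise (Pi.mulSingle (-t) σ) := by
  rw [conj_fibrewise]
  congr 1
  funext n
  simp only [Pi.mulSingle_apply, eq_neg_iff_add_eq_zero]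

theorem smallCancellation_encoding (l : ℕ) (hl : 13 ≤ l) (S : Set ℤ) (hS : (0 : ℤ) ∈ S)
    (rels : Set (FreeGroup (Fin l)))
    (hrels : rels = {x : FreeGroup (Fin l) |
      ∃ s ∈ S, x = (List.ofFn fun i : Fin l => (FreeGroup.of i) ^ s).prod}) :
    ∀ s : ℤ, s ∉ S →
      (List.ofFn fun i : Fin l => (PresentedGroup.of (rels := rels) i) ^ s).prod ≠ 1 := by
  intro s hs hone
  have hs0 : s ≠ 0 := fun h => hs (h ▸ hS)
  set σ : Equiv.Perm (Fin 3) := Equiv.swap 0 1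
  set τ : Equiv.Perm (Fin 3) := Equiv.swap 1 2
  have hστ : ¬ Commute σ τ := by
    rw [commute_iff_eq]
    decide
  set b := fibrewise (Pi.mulSingle 0 σ)
  set c := fibrewise (Pi.mulSingle (-s) τ)
  have hcomm {t : ℤ} (ht : t ≠ s) : Commute (fibrewise (Pi.mulSingle (-t) σ)) c :=
    (Pi.mulSingle_commute (neg_injective.ne ht) σ τ).map fibrewise
  have hbc : Commute b c := by simpa using hcomm hs0.symm
  have hprod (t : ℤ) : (List.ofFn fun i : Fin l => fourGens baseShift b c i ^ t).prod
      = ⁅fibrewise (Pi.mulSingle (-t) σ), c⁆ := by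
    rw [prod_fourGens_zpow hbc (by omega), conj_fibrewise_mulSingle]
  have hlift : ∀ r ∈ rels, FreeGroup.lift (fun i : Fin l => fourGens baseShift b c i) r = 1 := by
    subst hrels
    rintro _ ⟨t, ht, rfl⟩
    simp only [map_list_prod, List.map_ofFn, Function.comp_def, map_zpow, FreeGroup.lift_apply_of]
    rw [hprod, commutatorElement_eq_one_iff_commute]
    exact hcomm fun h => hs (h ▸ ht)
  have himage := congrArg (PresentedGroup.toGroup hlift) hone
  simp only [map_list_prod, List.map_ofFn, Function.comp_def, map_zpow, PresentedGroup.toGroup.of,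
    map_one] at himage
  rw [hprod, commutatorElement_eq_one_iff_commute] at himage
  -- Over the fibre `-s`, where both factors live, this says that `σ` and `τ` commute.
  have hfibre := congrFun (Commute.of_map fibrewise_injective himage).eq (-s)
  exact hστ (by simpa [commute_iff_eq] using hfibre)
end
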